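/- arXiv:1911.01494 — 5 statements merged into one kernel-verified Lean document; each statement's English description precedes it below -/
import Mathlib

section
/- (Substitution Lemma.) Let H_A and H_B be finite-dimensional complex Hilbert spaces and ψ ∈ H_A ⊗ H_B (Hilbert tensor product). Suppose V, V₁, …, V_k, M₁, …, M_n are unitaries on H_A and N₁, …, N_n are unitaries on H_B such that ‖(M_i ⊗ 1)ψ − (1 ⊗ N_i)ψ‖ ≤ ε₁ for every 1 ≤ i ≤ n, and ‖(V ⊗ 1)ψ − ((V₁⋯V_k) ⊗ 1)ψ‖ ≤ ε₂. Then ‖((V·M₁⋯M_n) ⊗ 1)ψ − ((V₁⋯V_k·M₁⋯M_n) ⊗ 1)ψ‖ ≤ 2nε₁ + ε₂. -/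
open Matrix Kronecker

/-- The action of a matrix on a vector of the corresponding Euclidean (Hilbert) space. -/
noncomputable def mApply {ι κ : Type*} [Fintype ι] (A : Matrix κ ι ℂ) (v : EuclideanSpace ℂ ι) :
    EuclideanSpace ℂ κ :=
  (WithLp.equiv 2 (κ → ℂ)).symm (A.mulVec (WithLp.equiv 2 (ι → ℂ) v))


theorem mApply_mul' {ι : Type*} [Fintype ι] (A B : Matrix ι ι ℂ) (v : EuclideanSpace ℂ ι) :
    mApply (A * B) v = mApply A (mApply B v) := by
  simp [mApply, Matrix.mulVec_mulVec]

theorem mApply_sub' {ι : Type*} [Fintype ι] (A : Matrix ι ι ℂ) (v w : EuclideanSpace ℂ ι) :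
    mApply A (v - w) = mApply A v - mApply A w := by
  simp [mApply, Matrix.mulVec_sub]

theorem mApply_norm' {ι : Type*} [Fintype ι] [DecidableEq ι] (A : Matrix ι ι ℂ)
    (hA : A ∈ Matrix.unitaryGroup ι ℂ) (v : EuclideanSpace ℂ ι) :
    ‖mApply A v‖ = ‖v‖ := by
  have h : star A * A = 1 := (Matrix.mem_unitaryGroup_iff').1 hA
  have key : inner ℂ (mApply A v) (mApply A v) = inner ℂ v v := by
    simp only [EuclideanSpace.inner_eq_star_dotProduct, mApply, WithLp.equiv_apply,
      WithLp.equiv_symm_apply, Matrix.star_mulVec]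
    rw [dotProduct_comm, ← Matrix.dotProduct_mulVec, Matrix.mulVec_mulVec,
      ← Matrix.star_eq_conjTranspose, h, Matrix.one_mulVec, dotProduct_comm]
  rw [@norm_eq_sqrt_re_inner ℂ, @norm_eq_sqrt_re_inner ℂ, key]

theorem kron_unit' {a b : ℕ} {A : Matrix (Fin a) (Fin a) ℂ} {B : Matrix (Fin b) (Fin b) ℂ}
    (hA : A ∈ Matrix.unitaryGroup (Fin a) ℂ) (hB : B ∈ Matrix.unitaryGroup (Fin b) ℂ) :
    A ⊗ₖ B ∈ Matrix.unitaryGroup (Fin a × Fin b) ℂ :=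
  Matrix.kronecker_mem_unitary hA hB

theorem subst_step {a b : ℕ} (ψ : EuclideanSpace ℂ (Fin a × Fin b))
    (X M : Matrix (Fin a) (Fin a) ℂ) (N : Matrix (Fin b) (Fin b) ℂ)
    (hX : X ∈ Matrix.unitaryGroup (Fin a) ℂ) (ε : ℝ)
    (h : ‖mApply (M ⊗ₖ (1 : Matrix (Fin b) (Fin b) ℂ)) ψ -
        mApply ((1 : Matrix (Fin a) (Fin a) ℂ) ⊗ₖ N) ψ‖ ≤ ε) :
    ‖mApply ((X * M) ⊗ₖ (1 : Matrix (Fin b) (Fin b) ℂ)) ψ -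
      mApply ((1 : Matrix (Fin a) (Fin a) ℂ) ⊗ₖ N)
        (mApply (X ⊗ₖ (1 : Matrix (Fin b) (Fin b) ℂ)) ψ)‖ ≤ ε := by
  have e1 : (X * M) ⊗ₖ (1 : Matrix (Fin b) (Fin b) ℂ) = (X ⊗ₖ 1) * (M ⊗ₖ 1) := by
    rw [← Matrix.mul_kronecker_mul, one_mul]
  have e2 : ((1 : Matrix (Fin a) (Fin a) ℂ) ⊗ₖ N) * (X ⊗ₖ (1 : Matrix (Fin b) (Fin b) ℂ))
      = (X ⊗ₖ 1) * (1 ⊗ₖ N) := by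
    rw [← Matrix.mul_kronecker_mul, ← Matrix.mul_kronecker_mul]; simp
  rw [← mApply_mul', e2, e1, mApply_mul', mApply_mul', ← mApply_sub',
    mApply_norm' _ (kron_unit' hX (one_mem _))]
  exact h

/-- Substitution Lemma. Here `H_A = ℂ^{nA}`, `H_B = ℂ^{nB}`,
`H_A ⊗ H_B` is realized as `EuclideanSpace ℂ (Fin nA × Fin nB)`, and `A ⊗ 1`, `1 ⊗ B`
are realized via Kronecker products. -/
theorem stmt_1 (nA nB : ℕ) (ψ : EuclideanSpace ℂ (Fin nA × Fin nB))
    (k n : ℕ) (V : Matrix (Fin nA) (Fin nA) ℂ)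
    (Vs : Fin k → Matrix (Fin nA) (Fin nA) ℂ)
    (M : Fin n → Matrix (Fin nA) (Fin nA) ℂ)
    (N : Fin n → Matrix (Fin nB) (Fin nB) ℂ)
    (hV : V ∈ Matrix.unitaryGroup (Fin nA) ℂ)
    (hVs : ∀ i, Vs i ∈ Matrix.unitaryGroup (Fin nA) ℂ)
    (hM : ∀ i, M i ∈ Matrix.unitaryGroup (Fin nA) ℂ)
    (hN : ∀ i, N i ∈ Matrix.unitaryGroup (Fin nB) ℂ)
    (ε₁ ε₂ : ℝ) (hε₁ : 0 ≤ ε₁) (hε₂ : 0 ≤ ε₂)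
    (h1 : ∀ i, ‖mApply ((M i) ⊗ₖ (1 : Matrix (Fin nB) (Fin nB) ℂ)) ψ -
        mApply ((1 : Matrix (Fin nA) (Fin nA) ℂ) ⊗ₖ (N i)) ψ‖ ≤ ε₁)
    (h2 : ‖mApply (V ⊗ₖ (1 : Matrix (Fin nB) (Fin nB) ℂ)) ψ -
        mApply ((List.ofFn Vs).prod ⊗ₖ (1 : Matrix (Fin nB) (Fin nB) ℂ)) ψ‖ ≤ ε₂) :
    ‖mApply ((V * (List.ofFn M).prod) ⊗ₖ (1 : Matrix (Fin nB) (Fin nB) ℂ)) ψ -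
        mApply (((List.ofFn Vs).prod * (List.ofFn M).prod) ⊗ₖ
          (1 : Matrix (Fin nB) (Fin nB) ℂ)) ψ‖ ≤ 2 * n * ε₁ + ε₂ := by
  have hW : (List.ofFn Vs).prod ∈ Matrix.unitaryGroup (Fin nA) ℂ := by
    apply Submonoid.list_prod_mem
    intro x hx
    obtain ⟨i, rfl⟩ := (List.mem_ofFn' _ _).1 hx
    exact hVs i
  generalize (List.ofFn Vs).prod = W at hW h2 ⊢
  induction n with
  | zero => simpa using h2
  | succ n ih =>
    have ih' := ih (fun i => M i.castSucc) (fun i => N i.castSucc) (fun i => hM _)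
      (fun i => hN _) (fun i => h1 _)
    have hP : (List.ofFn fun i : Fin n => M i.castSucc).prod ∈
        Matrix.unitaryGroup (Fin nA) ℂ := by
      apply Submonoid.list_prod_mem
      intro x hx
      obtain ⟨i, rfl⟩ := (List.mem_ofFn' _ _).1 hx
      exact hM _
    rw [List.ofFn_succ', List.concat_eq_append, List.prod_append, List.prod_singleton]
    generalize (List.ofFn fun i : Fin n => M i.castSucc).prod = P at ih' hP ⊢
    rw [← mul_assoc, ← mul_assoc]
    have a1 := subst_step ψ (V * P) _ _ (mul_mem hV hP) ε₁ (h1 (Fin.last n))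
    have a2 := subst_step ψ (W * P) _ _ (mul_mem hW hP) ε₁ (h1 (Fin.last n))
    rw [← mApply_norm' _ (kron_unit' (one_mem _) (hN (Fin.last n))), mApply_sub'] at ih'
    rw [← dist_eq_norm] at a1 a2 ih' ⊢
    rw [dist_comm] at a2
    refine (dist_triangle4 _ _ _ _).trans ((add_le_add_three a1 ih' a2).trans ?_)
    push_cast
    linarith
end

section
/- In the group 𝒫₀ the following hold: (u₁u₂)·o₂·(u₂u₁) = o₂, and for every natural number j ≥ 1, (u₁u₂)^j·(o₁o₂)·(u₂u₁)^j = (o₁o₂)^{r^j}. -/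
/-- The generators `o₁, …, o_r, u₁, …, u₅` of the group `𝒫₀`. -/
inductive P0Gen (r : ℕ) : Type
  | o : Fin r → P0Gen r
  | u : Fin 5 → P0Gen r

/-- The free-group letter `o_k` (`1 ≤ k ≤ r`; junk value `1` out of range). -/
def oW (r : ℕ) (k : ℕ) : FreeGroup (P0Gen r) :=
  if h : 1 ≤ k ∧ k ≤ r then FreeGroup.of (P0Gen.o ⟨k - 1, by omega⟩) else 1

/-- The free-group letter `u_k` (`1 ≤ k ≤ 5`; junk value `1` out of range). -/
def uW (r : ℕ) (k : ℕ) : FreeGroup (P0Gen r) :=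
  if h : 1 ≤ k ∧ k ≤ 5 then FreeGroup.of (P0Gen.u ⟨k - 1, by omega⟩) else 1

/-- The relations `s² = e` for every generator `s` of `𝒫₀`. -/
def P0RelsSq (r : ℕ) : Set (FreeGroup (P0Gen r)) :=
  Set.range fun g : P0Gen r => FreeGroup.of g * FreeGroup.of g

/-- The relations `u₃ = u₂o₁u₂`, `u₄ = u₂o₂u₂`, `u₅ = u₁u₃u₁`, `o₂ = u₁u₄u₁`,
`u₅ = o₁o_r o₁` of `𝒫₀`. -/
def P0RelsU (r : ℕ) : Set (FreeGroup (P0Gen r)) :=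
  { uW r 2 * oW r 1 * uW r 2 * (uW r 3)⁻¹,
    uW r 2 * oW r 2 * uW r 2 * (uW r 4)⁻¹,
    uW r 1 * uW r 3 * uW r 1 * (uW r 5)⁻¹,
    uW r 1 * uW r 4 * uW r 1 * (oW r 2)⁻¹,
    oW r 1 * oW r r * oW r 1 * (uW r 5)⁻¹ }

/-- The remaining conjugacy relations of `𝒫₀`: if `r` is even, `o_{1+2j} = o₁o_{2j}o₁` and
`o_{2+2j} = o₂o_{1+2j}o₂` for `j = 1, …, r/2 − 1`; if `r` is odd, `o₃ = o₂o₁o₂` together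
with `o_{2+2j} = o₁o_{1+2j}o₁` and `o_{3+2j} = o₂o_{2+2j}o₂` for `j = 1, …, (r−3)/2`. -/
def P0RelsO (r : ℕ) : Set (FreeGroup (P0Gen r)) :=
  if Even r then
    ⋃ j ∈ Finset.Icc 1 (r / 2 - 1),
      ({oW r 1 * oW r (2 * j) * oW r 1 * (oW r (1 + 2 * j))⁻¹,
        oW r 2 * oW r (1 + 2 * j) * oW r 2 * (oW r (2 + 2 * j))⁻¹} :
          Set (FreeGroup (P0Gen r)))
  else
    {oW r 2 * oW r 1 * oW r 2 * (oW r 3)⁻¹} ∪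
    ⋃ j ∈ Finset.Icc 1 ((r - 3) / 2),
      ({oW r 1 * oW r (1 + 2 * j) * oW r 1 * (oW r (2 + 2 * j))⁻¹,
        oW r 2 * oW r (2 + 2 * j) * oW r 2 * (oW r (3 + 2 * j))⁻¹} :
          Set (FreeGroup (P0Gen r)))

/-- All defining relations of `𝒫₀`. -/
def P0Rels (r : ℕ) : Set (FreeGroup (P0Gen r)) := P0RelsSq r ∪ P0RelsU r ∪ P0RelsO r

/-- The group `𝒫₀`, presented by the above generators and relations. -/
abbrev P0 (r : ℕ) : Type := PresentedGroup (P0Rels r)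

theorem P0_rel_aux {r : ℕ} {a b : FreeGroup (P0Gen r)} (h : a * b⁻¹ ∈ P0Rels r) :
    PresentedGroup.mk (P0Rels r) a = PresentedGroup.mk (P0Rels r) b := by
  have h1 : PresentedGroup.mk (P0Rels r) (a * b⁻¹) = 1 := PresentedGroup.one_of_mem h
  rw [map_mul, map_inv] at h1
  exact mul_inv_eq_one.mp h1

theorem P0_o_step {G : Type*} [Group G] (a b : G) (n : ℕ) :
    b * (a * (b * (a * b) ^ n) * a) * b = b * (a * b) ^ (n + 2) := by
  rw [pow_succ, pow_succ']
  have : (a * b) * (a * b) ^ n * (a * b) = a * b * ((a * b) ^ n * (a * b)) := by group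
  rw [this]; simp only [mul_assoc]

theorem P0_or (r : ℕ) (hr : 2 ≤ r) :
    PresentedGroup.mk (P0Rels r) (oW r r) =
      PresentedGroup.mk (P0Rels r) (oW r 2) *
        (PresentedGroup.mk (P0Rels r) (oW r 1) * PresentedGroup.mk (P0Rels r) (oW r 2)) ^ (r - 2) := by
  by_cases he : Even r
  · have key : ∀ j : ℕ, j ≤ r / 2 - 1 →
        PresentedGroup.mk (P0Rels r) (oW r (2 + 2 * j)) =
        PresentedGroup.mk (P0Rels r) (oW r 2) *
        (PresentedGroup.mk (P0Rels r) (oW r 1) * PresentedGroup.mk (P0Rels r) (oW r 2)) ^ (2 * j) := by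
      intro j
      induction j with
      | zero => intro _; simp
      | succ j ih =>
        intro hj
        have h1 := P0_rel_aux (r := r) (a := oW r 1 * oW r (2 * (j+1)) * oW r 1)
          (b := oW r (1 + 2 * (j+1))) (by
            right; rw [P0RelsO, if_pos he]
            simp only [Set.mem_iUnion, Finset.mem_Icc]
            exact ⟨j+1, ⟨by omega, hj⟩, Or.inl rfl⟩)
        have h2 := P0_rel_aux (r := r) (a := oW r 2 * oW r (1 + 2 * (j+1)) * oW r 2)
          (b := oW r (2 + 2 * (j+1))) (by
            right; rw [P0RelsO, if_pos he]
            simp only [Set.mem_iUnion, Finset.mem_Icc]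
            exact ⟨j+1, ⟨by omega, hj⟩, Or.inr rfl⟩)
        have e : 2 * (j + 1) = 2 + 2 * j := by ring
        rw [← h2, map_mul, map_mul, ← h1, map_mul, map_mul, e, ih (by omega), P0_o_step]
        congr 2
    obtain ⟨k, hk⟩ := he
    have := key (r / 2 - 1) le_rfl
    rwa [show 2 + 2 * (r / 2 - 1) = r by omega, show 2 * (r / 2 - 1) = r - 2 by omega] at this
  · have key : ∀ j : ℕ, j ≤ (r - 3) / 2 →
        PresentedGroup.mk (P0Rels r) (oW r (3 + 2 * j)) =
        PresentedGroup.mk (P0Rels r) (oW r 2) *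
        (PresentedGroup.mk (P0Rels r) (oW r 1) * PresentedGroup.mk (P0Rels r) (oW r 2)) ^ (2 * j + 1) := by
      intro j
      induction j with
      | zero =>
        intro _
        have h0 := P0_rel_aux (r := r) (a := oW r 2 * oW r 1 * oW r 2)
          (b := oW r 3) (by right; rw [P0RelsO, if_neg he]; exact Or.inl rfl)
        simp only [mul_zero, add_zero, zero_add, pow_one]
        rw [← h0, map_mul, map_mul, mul_assoc]
      | succ j ih =>
        intro hj
        have h1 := P0_rel_aux (r := r) (a := oW r 1 * oW r (1 + 2 * (j+1)) * oW r 1)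
          (b := oW r (2 + 2 * (j+1))) (by
            right; rw [P0RelsO, if_neg he]; right
            simp only [Set.mem_iUnion, Finset.mem_Icc]
            exact ⟨j+1, ⟨by omega, hj⟩, Or.inl rfl⟩)
        have h2 := P0_rel_aux (r := r) (a := oW r 2 * oW r (2 + 2 * (j+1)) * oW r 2)
          (b := oW r (3 + 2 * (j+1))) (by
            right; rw [P0RelsO, if_neg he]; right
            simp only [Set.mem_iUnion, Finset.mem_Icc]
            exact ⟨j+1, ⟨by omega, hj⟩, Or.inr rfl⟩)
        have e : 1 + 2 * (j + 1) = 3 + 2 * j := by ring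
        rw [← h2, map_mul, map_mul, ← h1, map_mul, map_mul, e, ih (by omega), P0_o_step]
        congr 2
    rw [Nat.not_even_iff_odd] at he
    obtain ⟨k, hk⟩ := he
    have := key ((r - 3) / 2) le_rfl
    rwa [show 3 + 2 * ((r - 3) / 2) = r by omega, show 2 * ((r - 3) / 2) + 1 = r - 2 by omega] at this

theorem P0_u_sq (r k : ℕ) :
    PresentedGroup.mk (P0Rels r) (uW r k) * PresentedGroup.mk (P0Rels r) (uW r k) = 1 := by
  rw [← map_mul, uW]
  split_ifs with h
  · exact PresentedGroup.one_of_mem (Or.inl (Or.inl ⟨_, rfl⟩))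
  · simp

theorem P0_abs {G : Type*} [Group G] (r : ℕ) (hr : 2 ≤ r) (a b c u v u3 u4 u5 : G)
    (hu : u * u = 1) (hv : v * v = 1) (h3 : v * a * v = u3) (h4 : v * b * v = u4)
    (h5 : u * u3 * u = u5) (hb : u * u4 * u = b) (hc : a * c * a = u5)
    (hcr : c = b * (a * b) ^ (r - 2)) :
    u * v * b * (v * u) = b ∧ ∀ j : ℕ, (u * v) ^ j * (a * b) * (v * u) ^ j = (a * b) ^ r ^ j := by
  have hinv : v * u = (u * v)⁻¹ := by
    rw [mul_inv_rev, inv_eq_of_mul_eq_one_right hu, inv_eq_of_mul_eq_one_right hv]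
  have e1 : u * v * b * (v * u) = b := by
    rw [← h4] at hb
    simpa only [mul_assoc] using hb
  have e2 : u * v * a * (v * u) = u5 := by
    rw [← h3] at h5
    simpa only [mul_assoc] using h5
  rw [hinv] at e1 e2 ⊢
  refine ⟨e1, fun j => ?_⟩
  have e3 : (u * v) * (a * b) * (u * v)⁻¹ = (a * b) ^ r := by
    rw [← conj_mul, e1, e2, ← hc, hcr]
    obtain ⟨n, rfl⟩ := Nat.exists_eq_add_of_le' hr
    rw [Nat.add_sub_cancel, pow_succ, pow_succ']
    simp only [mul_assoc]
  induction j with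
  | zero => simp
  | succ j ih =>
    have : (u * v) ^ (j + 1) * (a * b) * (u * v)⁻¹ ^ (j + 1) =
        (u * v) * ((u * v) ^ j * (a * b) * (u * v)⁻¹ ^ j) * (u * v)⁻¹ := by
      rw [pow_succ' (u * v), pow_succ (u * v)⁻¹]; simp only [mul_assoc]
    rw [this, ih, ← conj_pow, e3, ← pow_mul, pow_succ']

/-- In `𝒫₀`: `(u₁u₂)·o₂·(u₂u₁) = o₂`, and for every `j ≥ 1`,
`(u₁u₂)^j (o₁o₂) (u₂u₁)^j = (o₁o₂)^{r^j}`.  (`PresentedGroup.mk` is the canonical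
projection of the free group onto `𝒫₀`.) -/
theorem stmt_2 (r : ℕ) (hr : 2 ≤ r) :
    PresentedGroup.mk (P0Rels r) (uW r 1 * uW r 2 * oW r 2 * (uW r 2 * uW r 1)) =
      PresentedGroup.mk (P0Rels r) (oW r 2) ∧
    ∀ j : ℕ, 1 ≤ j →
      PresentedGroup.mk (P0Rels r)
          ((uW r 1 * uW r 2) ^ j * (oW r 1 * oW r 2) * (uW r 2 * uW r 1) ^ j) =
        PresentedGroup.mk (P0Rels r) ((oW r 1 * oW r 2) ^ r ^ j) := by
  have hrel : ∀ a b : FreeGroup (P0Gen r), a * b⁻¹ ∈ P0RelsU r →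
      PresentedGroup.mk (P0Rels r) a = PresentedGroup.mk (P0Rels r) b :=
    fun a b h => P0_rel_aux (Or.inl (Or.inr h))
  have h3 := hrel (uW r 2 * oW r 1 * uW r 2) (uW r 3) (by simp [P0RelsU])
  have h4 := hrel (uW r 2 * oW r 2 * uW r 2) (uW r 4) (by simp [P0RelsU])
  have h5 := hrel (uW r 1 * uW r 3 * uW r 1) (uW r 5) (by simp [P0RelsU])
  have hb := hrel (uW r 1 * uW r 4 * uW r 1) (oW r 2) (by simp [P0RelsU])
  have hc := hrel (oW r 1 * oW r r * oW r 1) (uW r 5) (by simp [P0RelsU])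
  simp only [map_mul, map_pow] at h3 h4 h5 hb hc ⊢
  have H := P0_abs r hr _ _ _ _ _ _ _ _ (P0_u_sq r 1) (P0_u_sq r 2) h3 h4 h5 hb hc (P0_or r hr)
  exact ⟨H.1, fun j _ => H.2 j⟩
end

section
/- In the group 𝒫₁ the following hold for every triple (i,j,k) ∈ C(r): d_i c_j d_i = b_k and a_i a_j a_i = a_k. -/
/-- The relabelled generator-word `a_i` of `𝒫₀`: `a₁ = o₁`, `a₂ = o₂`, `a_{i+2} = u_i`
for `i = 1, …, 5`, and `a_j = o_{j−5}` for `j = 8, …, r+5`. -/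
def aW (r : ℕ) (i : ℕ) : FreeGroup (P0Gen r) :=
  if i ≤ 2 then oW r i else if i ≤ 7 then uW r (i - 2) else oW r (i - 5)

/-- `C(r)`: the set of triples `(i,j,k)` such that `a_i a_j a_i = a_k` is one of the
conjugacy relations of `𝒫₀`. -/
def Cset (r : ℕ) : Set (ℕ × ℕ × ℕ) :=
  {t | aW r t.1 * aW r t.2.1 * aW r t.1 * (aW r t.2.2)⁻¹ ∈ P0RelsU r ∪ P0RelsO r}

/-- The generators `a_i, b_i, c_i, d_i` (`1 ≤ i ≤ r+5`), `f₀`, and `h_{jk}` (one for each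
triple `(i,j,k) ∈ C(r)`) of the group `𝒫₁`. -/
inductive P1Gen (r : ℕ) : Type
  | a : Fin (r + 5) → P1Gen r
  | b : Fin (r + 5) → P1Gen r
  | c : Fin (r + 5) → P1Gen r
  | d : Fin (r + 5) → P1Gen r
  | f0 : P1Gen r
  | h : {t : ℕ × ℕ × ℕ // t ∈ Cset r} → P1Gen r

/-- The free-group letter `a_i` of `𝒫₁` (`1 ≤ i ≤ r+5`; junk value `1` out of range). -/
def aw (r : ℕ) (i : ℕ) : FreeGroup (P1Gen r) :=
  if h : 1 ≤ i ∧ i ≤ r + 5 then FreeGroup.of (P1Gen.a ⟨i - 1, by omega⟩) else 1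

/-- The free-group letter `b_i` of `𝒫₁`. -/
def bw (r : ℕ) (i : ℕ) : FreeGroup (P1Gen r) :=
  if h : 1 ≤ i ∧ i ≤ r + 5 then FreeGroup.of (P1Gen.b ⟨i - 1, by omega⟩) else 1

/-- The free-group letter `c_i` of `𝒫₁`. -/
def cw (r : ℕ) (i : ℕ) : FreeGroup (P1Gen r) :=
  if h : 1 ≤ i ∧ i ≤ r + 5 then FreeGroup.of (P1Gen.c ⟨i - 1, by omega⟩) else 1

/-- The free-group letter `d_i` of `𝒫₁`. -/
def dw (r : ℕ) (i : ℕ) : FreeGroup (P1Gen r) :=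
  if h : 1 ≤ i ∧ i ≤ r + 5 then FreeGroup.of (P1Gen.d ⟨i - 1, by omega⟩) else 1

/-- The free-group letter `f₀` of `𝒫₁`. -/
def fw (r : ℕ) : FreeGroup (P1Gen r) := FreeGroup.of P1Gen.f0

/-- The free-group letter `h_{jk}` of `𝒫₁`, for `(i,j,k) ∈ C(r)`. -/
def hw (r : ℕ) (t : {t : ℕ × ℕ × ℕ // t ∈ Cset r}) : FreeGroup (P1Gen r) :=
  FreeGroup.of (P1Gen.h t)

/-- The defining relations of `𝒫₁`: all generators are involutions; `a_i = b_i c_i`,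
`a_i = f₀ d_i`, `f₀ b_i f₀ = c_i` for `1 ≤ i ≤ r+5`; and `h_{jk} b_j c_k = e`,
`d_i b_j d_i = c_k` for `(i,j,k) ∈ C(r)`. -/
def P1Rels (r : ℕ) : Set (FreeGroup (P1Gen r)) :=
  (Set.range fun g : P1Gen r => FreeGroup.of g * FreeGroup.of g) ∪
  (⋃ i ∈ Finset.Icc 1 (r + 5),
    ({bw r i * cw r i * (aw r i)⁻¹,
      fw r * dw r i * (aw r i)⁻¹,
      fw r * bw r i * fw r * (cw r i)⁻¹} : Set (FreeGroup (P1Gen r)))) ∪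
  (⋃ t : {t : ℕ × ℕ × ℕ // t ∈ Cset r},
    ({hw r t * bw r t.1.2.1 * cw r t.1.2.2,
      dw r t.1.1 * bw r t.1.2.1 * dw r t.1.1 * (cw r t.1.2.2)⁻¹} :
        Set (FreeGroup (P1Gen r))))

/-- The group `𝒫₁`, presented by the above generators and relations. -/
abbrev P1 (r : ℕ) : Type := PresentedGroup (P1Rels r)

theorem aux_group {G : Type*} [Group G] (f d ai aj ak bj cj bk ck : G)
    (hf : f * f = 1) (hai : ai * ai = 1) (hd : d * d = 1) (hak : ak * ak = 1)
    (hbj : bj * bj = 1) (hbk : bk * bk = 1) (hck : ck * ck = 1)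
    (hi : f * d = ai ∨ (d = 1 ∧ ai = 1))
    (haj : bj * cj = aj) (hak' : bk * ck = ak)
    (hcj : f * bj * f = cj) (hck' : f * bk * f = ck)
    (hc : d * bj * d = ck) : d * cj * d = bk ∧ ai * aj * ai = ak := by
  have inv : ∀ x : G, x * x = 1 → x⁻¹ = x := fun x hx => inv_eq_of_mul_eq_one_left hx
  have hff : ∀ x : G, f * (f * x) = x := fun x => by rw [← mul_assoc, hf, one_mul]
  have hdd : ∀ x : G, d * (d * x) = x := fun x => by rw [← mul_assoc, hd, one_mul]
  have hfk : f * ck * f = bk := by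
    rw [← hck']; simp only [mul_assoc, hff, hf, mul_one]
  have comm : d * f = f * d := by
    rcases hi with h | ⟨h, -⟩
    · have h1 := inv _ hai
      rw [← h, mul_inv_rev, inv _ hf, inv _ hd] at h1
      exact h1
    · rw [h]; simp
  have h1 : d * cj * d = bk := by
    calc d * cj * d = (d * f) * bj * (f * d) := by rw [← hcj]; simp only [mul_assoc]
      _ = f * (d * bj * d) * f := by rw [← comm, comm]; simp only [mul_assoc]; rw [comm]
      _ = bk := by rw [hc, hfk]
  have h2 : d * aj * d = ck * bk := by
    rw [← haj, ← hc, ← h1]; simp only [mul_assoc, hdd]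
  have hkk : ck * bk = ak := by
    have h3 := inv _ hak
    rw [← hak', mul_inv_rev, inv _ hbk, inv _ hck] at h3
    rw [h3, hak']
  refine ⟨h1, ?_⟩
  rcases hi with h | ⟨h, h'⟩
  · calc ai * aj * ai = f * (d * aj * d) * f := by
          rw [← h]; simp only [mul_assoc]; rw [comm]
      _ = (f * ck * f) * (f * bk * f) := by rw [h2]; simp only [mul_assoc, hff]
      _ = ak := by rw [hfk, hck', hak']
  · rw [h] at h2
    rw [h', ← hkk, ← h2]

theorem aux_sq (r : ℕ) (g : P1Gen r) :
    PresentedGroup.mk (P1Rels r) (FreeGroup.of g) *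
      PresentedGroup.mk (P1Rels r) (FreeGroup.of g) = 1 := by
  rw [← map_mul]
  exact PresentedGroup.one_of_mem (Or.inl (Or.inl ⟨g, rfl⟩))

theorem aux_rel (r : ℕ) (x y : FreeGroup (P1Gen r)) (h : x * y⁻¹ ∈ P1Rels r) :
    PresentedGroup.mk (P1Rels r) x = PresentedGroup.mk (P1Rels r) y := by
  have := PresentedGroup.one_of_mem h
  rwa [map_mul, map_inv, mul_inv_eq_one] at this

theorem aux_all (r i : ℕ) :
    let m := PresentedGroup.mk (P1Rels r)
    m (aw r i) * m (aw r i) = 1 ∧ m (bw r i) * m (bw r i) = 1 ∧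
    m (cw r i) * m (cw r i) = 1 ∧ m (dw r i) * m (dw r i) = 1 ∧
    m (bw r i) * m (cw r i) = m (aw r i) ∧
    m (fw r) * m (bw r i) * m (fw r) = m (cw r i) ∧
    (m (fw r) * m (dw r i) = m (aw r i) ∨ (m (dw r i) = 1 ∧ m (aw r i) = 1)) := by
  intro m
  by_cases h : 1 ≤ i ∧ i ≤ r + 5
  · have key : ∀ w ∈ ({bw r i * cw r i * (aw r i)⁻¹, fw r * dw r i * (aw r i)⁻¹,
        fw r * bw r i * fw r * (cw r i)⁻¹} : Set (FreeGroup (P1Gen r))), w ∈ P1Rels r := by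
      intro w hw
      refine Or.inl (Or.inr ?_)
      simp only [Set.mem_iUnion]
      exact ⟨i, Finset.mem_Icc.2 h, hw⟩
    refine ⟨?_, ?_, ?_, ?_, ?_, ?_, Or.inl ?_⟩
    · simp only [aw, h, and_self, dif_pos]; exact aux_sq r _
    · simp only [bw, h, and_self, dif_pos]; exact aux_sq r _
    · simp only [cw, h, and_self, dif_pos]; exact aux_sq r _
    · simp only [dw, h, and_self, dif_pos]; exact aux_sq r _
    · rw [← map_mul]; exact aux_rel r _ _ (key _ (by simp))
    · rw [← map_mul, ← map_mul]; exact aux_rel r _ _ (key _ (by simp))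
    · rw [← map_mul]; exact aux_rel r _ _ (key _ (by simp))
  · have hf : m (fw r) * m (fw r) = 1 := aux_sq r _
    simp [aw, bw, cw, dw, h, hf]

/-- In `𝒫₁`, for every triple `(i,j,k) ∈ C(r)`: `d_i c_j d_i = b_k`
and `a_i a_j a_i = a_k`. -/
theorem stmt_4 (r : ℕ) (hr : 2 ≤ r) (i j k : ℕ) (hijk : (i, j, k) ∈ Cset r) :
    PresentedGroup.mk (P1Rels r) (dw r i * cw r j * dw r i) =
      PresentedGroup.mk (P1Rels r) (bw r k) ∧
    PresentedGroup.mk (P1Rels r) (aw r i * aw r j * aw r i) =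
      PresentedGroup.mk (P1Rels r) (aw r k) := by
  have hf : PresentedGroup.mk (P1Rels r) (fw r) * PresentedGroup.mk (P1Rels r) (fw r) = 1 :=
    aux_sq r _
  obtain ⟨hai, -, -, hd, -, -, hi⟩ := aux_all r i
  obtain ⟨-, hbj, -, -, haj, hcj, -⟩ := aux_all r j
  obtain ⟨hak, hbk, hck, -, hak', hck', -⟩ := aux_all r k
  have hc : PresentedGroup.mk (P1Rels r) (dw r i * bw r j * dw r i) =
      PresentedGroup.mk (P1Rels r) (cw r k) := by
    apply aux_rel
    refine Or.inr ?_
    simp only [Set.mem_iUnion]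
    exact ⟨⟨(i, j, k), hijk⟩, by simp⟩
  simp only [map_mul] at hc ⊢
  exact aux_group _ _ _ _ _ _ _ _ _ hf hai hd hak hbj hbk hck hi haj hak' hcj hck' hc
end

section
/- There exists an injective group homomorphism φ : 𝒫₀ → 𝒫₁ mapping each generator a_i of 𝒫₀ (under the relabeling a₁ = o₁, a₂ = o₂, a_{i+2} = u_i, a_j = o_{j−5}) to the generator a_i of 𝒫₁; that is, 𝒫₀ embeds into 𝒫₁. -/
def oIx (k : ℕ) : ℕ := if k ≤ 2 then k else k + 5

lemma oW_eq (r k : ℕ) : oW r k = aW r (oIx k) := by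
  unfold aW oIx
  by_cases h : k ≤ 2
  · simp [h]
  · have h1 : ¬ (k + 5 ≤ 2) := by omega
    have h2 : ¬ (k + 5 ≤ 7) := by omega
    simp [h, h1, h2]

lemma uW_eq (r k : ℕ) (h1 : 1 ≤ k) (h5 : k ≤ 5) : uW r k = aW r (k + 2) := by
  unfold aW
  have h1 : ¬ (k + 2 ≤ 2) := by omega
  have h2 : (k + 2 ≤ 7) := by omega
  rw [if_neg h1, if_pos h2, Nat.add_sub_cancel]

def InR (r i : ℕ) : Prop := 1 ≤ i ∧ i ≤ r + 5

lemma oIx_in {r k : ℕ} (h1 : 1 ≤ k) (h2 : k ≤ r) : InR r (oIx k) := by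
  unfold InR oIx; split_ifs <;> omega

def relW (r i j k : ℕ) : FreeGroup (P0Gen r) := aW r i * aW r j * aW r i * (aW r k)⁻¹

lemma rel_struct (r : ℕ) (hr : 2 ≤ r) (w : FreeGroup (P0Gen r))
    (hw : w ∈ P0RelsU r ∪ P0RelsO r) :
    ∃ i j k, InR r i ∧ InR r j ∧ InR r k ∧ w = relW r i j k := by
  have u : ∀ k, 1 ≤ k → k ≤ 5 → InR r (k + 2) := by intro k _ _; unfold InR; omega
  rcases hw with hw | hw
  · simp only [P0RelsU, Set.mem_insert_iff, Set.mem_singleton_iff] at hw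
    rcases hw with h | h | h | h | h <;> rw [h] <;>
      simp only [uW_eq r 1 (by omega) (by omega), uW_eq r 2 (by omega) (by omega),
        uW_eq r 3 (by omega) (by omega), uW_eq r 4 (by omega) (by omega),
        uW_eq r 5 (by omega) (by omega), oW_eq] <;>
      refine ⟨_, _, _, ?_, ?_, ?_, rfl⟩ <;>
      first
        | exact oIx_in (by omega) (by omega)
        | (unfold InR; omega)
  · unfold P0RelsO at hw
    split_ifs at hw with he
    · simp only [Set.mem_iUnion, Finset.mem_Icc, Set.mem_insert_iff, Set.mem_singleton_iff] at hw
      obtain ⟨j, hj, h | h⟩ := hw <;> rw [h] <;> simp only [oW_eq] <;>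
      exact ⟨_, _, _, oIx_in (by omega) (by omega), oIx_in (by omega) (by omega),
        oIx_in (by omega) (by omega), rfl⟩
    · have h3 : 3 ≤ r := by
        rcases Nat.lt_or_ge r 3 with h | h
        · exact absurd (by have : r = 2 := by omega
                           subst this; exact even_two) he
        · exact h
      simp only [Set.mem_union, Set.mem_iUnion, Finset.mem_Icc, Set.mem_insert_iff,
        Set.mem_singleton_iff] at hw
      rcases hw with h | ⟨j, hj, h | h⟩ <;> rw [h] <;> simp only [oW_eq] <;>
      exact ⟨_, _, _, oIx_in (by omega) (by omega), oIx_in (by omega) (by omega),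
        oIx_in (by omega) (by omega), rfl⟩

lemma aW_out (r i : ℕ) (h : ¬ InR r i) (hr : 2 ≤ r) : aW r i = 1 := by
  unfold InR at h
  unfold aW oW uW
  split_ifs <;> first | rfl | omega

lemma aW_in (r i : ℕ) (h : InR r i) (hr : 2 ≤ r) : ∃ g, aW r i = FreeGroup.of g := by
  unfold InR at h
  unfold aW oW uW
  split_ifs <;> first | exact ⟨_, rfl⟩ | omega

lemma Cset_fst_in (r : ℕ) (hr : 2 ≤ r) (t : ℕ × ℕ × ℕ) (ht : t ∈ Cset r) : InR r t.1 := by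
  by_contra hn
  let e : FreeGroup (P0Gen r) →* Multiplicative ℤ :=
    FreeGroup.lift fun _ => Multiplicative.ofAdd 1
  obtain ⟨i, j, k, hi, hj, hk, h⟩ := rel_struct r hr _ ht
  have hin : ∀ i, InR r i → (e (aW r i)).toAdd = 1 := by
    intro i hi
    obtain ⟨g, hg⟩ := aW_in r i hi hr
    rw [hg]; simp [e]
  have hany : ∀ i, (e (aW r i)).toAdd = 1 ∨ (e (aW r i)).toAdd = 0 := by
    intro i
    by_cases h : InR r i
    · exact Or.inl (hin i h)
    · right; rw [aW_out r i h hr]; simp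
  have h' := congrArg (fun w => (e w).toAdd) h
  rw [aW_out r t.1 hn hr] at h'
  simp only [relW, map_mul, map_inv, toAdd_mul, toAdd_inv, hin i hi, hin j hj, hin k hk,
    map_one, toAdd_one] at h'
  have := hany t.2.1
  have := hany t.2.2
  omega

lemma P1_one {r : ℕ} {w : FreeGroup (P1Gen r)} (h : w ∈ P1Rels r) :
    PresentedGroup.mk (P1Rels r) w = 1 := PresentedGroup.one_of_mem h

lemma P0_one {r : ℕ} {w : FreeGroup (P0Gen r)} (h : w ∈ P0Rels r) :
    PresentedGroup.mk (P0Rels r) w = 1 := PresentedGroup.one_of_mem h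

lemma conj_alg {G : Type*} [Group G] {f ai di bj cj aj bk ck ak : G}
    (hf : f * f = 1) (hd : di * di = 1) (hai : ai * ai = 1)
    (e1 : ai = f * di) (e2 : aj = bj * cj) (e3 : ak = bk * ck)
    (e4 : f * bj * f = cj) (e5 : f * bk * f = ck) (e6 : di * bj * di = ck) :
    ai * aj * ai = ak := by
  have fi : f⁻¹ = f := inv_eq_of_mul_eq_one_left hf
  have dii : di⁻¹ = di := inv_eq_of_mul_eq_one_left hd
  have hc : f * di = di * f := by
    have : (f * di)⁻¹ = f * di := inv_eq_of_mul_eq_one_left (by rw [← e1]; exact hai)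
    rw [← this, mul_inv_rev, fi, dii]
  have e7 : di * cj * di = bk := by
    calc di * cj * di = (di * f) * bj * (f * di) := by rw [← e4]; group
      _ = f * (di * bj * di) * f := by rw [← hc]; nth_rw 2 [hc]; group
      _ = (f * f) * bk * (f * f) := by rw [e6, ← e5]; group
      _ = bk := by rw [hf]; simp
  calc ai * aj * ai = (f * di) * (bj * cj) * (di * f) := by rw [e1, e2]; nth_rw 2 [hc]
    _ = f * (di * bj * (di * di) * cj * di) * f := by rw [hd]; group
    _ = f * ((di * bj * di) * (di * cj * di)) * f := by group
    _ = (f * ck * f) * (f * bk * f) := by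
        rw [e6, e7]
        calc f * (ck * bk) * f = f * ck * 1 * bk * f := by group
          _ = _ := by rw [← hf]; group
    _ = ak := by
        rw [e5, e3, ← e5]
        congr 1
        calc f * (f * bk * f) * f = (f * f) * bk * (f * f) := by group
          _ = bk := by rw [hf]; simp

section P1facts
variable {r : ℕ}

lemma P1_sq (g : P1Gen r) : PresentedGroup.mk (P1Rels r) (FreeGroup.of g) *
    PresentedGroup.mk (P1Rels r) (FreeGroup.of g) = 1 := by
  rw [← map_mul]
  exact P1_one (Or.inl (Or.inl ⟨g, rfl⟩))

lemma P1_mid {i : ℕ} (hi : InR r i) {w : FreeGroup (P1Gen r)}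
    (h : w ∈ ({bw r i * cw r i * (aw r i)⁻¹,
      fw r * dw r i * (aw r i)⁻¹,
      fw r * bw r i * fw r * (cw r i)⁻¹} : Set (FreeGroup (P1Gen r)))) :
    PresentedGroup.mk (P1Rels r) w = 1 := by
  refine P1_one (Or.inl (Or.inr ?_))
  simp only [Set.mem_iUnion]
  exact ⟨i, Finset.mem_Icc.2 hi, h⟩

lemma P1_bc {i : ℕ} (hi : InR r i) : PresentedGroup.mk (P1Rels r) (aw r i) =
    PresentedGroup.mk (P1Rels r) (bw r i) * PresentedGroup.mk (P1Rels r) (cw r i) := by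
  have := P1_mid hi (w := bw r i * cw r i * (aw r i)⁻¹) (by simp)
  rw [map_mul, map_inv, mul_inv_eq_one, map_mul] at this
  exact this.symm

lemma P1_fd {i : ℕ} (hi : InR r i) : PresentedGroup.mk (P1Rels r) (aw r i) =
    PresentedGroup.mk (P1Rels r) (fw r) * PresentedGroup.mk (P1Rels r) (dw r i) := by
  have := P1_mid hi (w := fw r * dw r i * (aw r i)⁻¹) (by simp)
  rw [map_mul, map_inv, mul_inv_eq_one, map_mul] at this
  exact this.symm

lemma P1_fbf {i : ℕ} (hi : InR r i) : PresentedGroup.mk (P1Rels r) (fw r) *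
    PresentedGroup.mk (P1Rels r) (bw r i) * PresentedGroup.mk (P1Rels r) (fw r) =
    PresentedGroup.mk (P1Rels r) (cw r i) := by
  have := P1_mid hi (w := fw r * bw r i * fw r * (cw r i)⁻¹) (by simp)
  rw [map_mul, map_inv, mul_inv_eq_one, map_mul, map_mul] at this
  exact this

lemma P1_dbd {i j k : ℕ} (h : (i, j, k) ∈ Cset r) : PresentedGroup.mk (P1Rels r) (dw r i) *
    PresentedGroup.mk (P1Rels r) (bw r j) * PresentedGroup.mk (P1Rels r) (dw r i) =
    PresentedGroup.mk (P1Rels r) (cw r k) := by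
  have : PresentedGroup.mk (P1Rels r) (dw r i * bw r j * dw r i * (cw r k)⁻¹) = 1 := by
    refine P1_one (Or.inr ?_)
    simp only [Set.mem_iUnion]
    exact ⟨⟨(i, j, k), h⟩, by simp⟩
  rw [map_mul, map_inv, mul_inv_eq_one, map_mul, map_mul] at this
  exact this

lemma P1_conj {i j k : ℕ} (hi : InR r i) (hj : InR r j) (hk : InR r k)
    (h : (i, j, k) ∈ Cset r) : PresentedGroup.mk (P1Rels r) (aw r i) *
    PresentedGroup.mk (P1Rels r) (aw r j) * PresentedGroup.mk (P1Rels r) (aw r i) =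
    PresentedGroup.mk (P1Rels r) (aw r k) := by
  refine conj_alg (P1_sq _) ?_ ?_ (P1_fd hi) (P1_bc hj) (P1_bc hk) (P1_fbf hj) (P1_fbf hk)
    (P1_dbd h)
  · unfold dw; unfold InR at hi; rw [dif_pos hi]; exact P1_sq _
  · unfold aw; unfold InR at hi; rw [dif_pos hi]; exact P1_sq _

end P1facts

/-- images of generators of P0 in P1 -/
def phiGen (r : ℕ) : P0Gen r → P1 r
  | P0Gen.o k => PresentedGroup.mk (P1Rels r) (aw r (oIx (k + 1)))
  | P0Gen.u k => PresentedGroup.mk (P1Rels r) (aw r (k + 3))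

lemma lift_aW (r i : ℕ) (hr : 2 ≤ r) (hi : InR r i) :
    FreeGroup.lift (phiGen r) (aW r i) = PresentedGroup.mk (P1Rels r) (aw r i) := by
  unfold InR at hi
  unfold aW oW uW
  split_ifs <;> first
    | omega
    | (rw [FreeGroup.lift_apply_of]
       simp only [phiGen, oIx]
       congr 2
       try split_ifs
       all_goals omega)

lemma aw_sq (r i : ℕ) : PresentedGroup.mk (P1Rels r) (aw r i) *
    PresentedGroup.mk (P1Rels r) (aw r i) = 1 := by
  unfold aw
  split_ifs
  · exact P1_sq _
  · simp

lemma phi_rels (r : ℕ) (hr : 2 ≤ r) : ∀ w ∈ P0Rels r, FreeGroup.lift (phiGen r) w = 1 := by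
  intro w hw
  have key : w ∈ P0RelsU r ∪ P0RelsO r → FreeGroup.lift (phiGen r) w = 1 := by
    intro hw
    obtain ⟨i, j, k, hi, hj, hk, rfl⟩ := rel_struct r hr w hw
    rw [relW, map_mul, map_inv, mul_inv_eq_one, map_mul, map_mul, lift_aW r i hr hi,
      lift_aW r j hr hj, lift_aW r k hr hk]
    exact P1_conj hi hj hk hw
  rcases hw with (⟨g, rfl⟩ | hw) | hw
  · simp only [map_mul, FreeGroup.lift_apply_of]
    cases g <;> exact aw_sq _ _
  · exact key (Or.inl hw)
  · exact key (Or.inr hw)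

/-! ### The retraction-like representation on `P0 × P0` -/

def LA (G : Type*) [Group G] : G × G →* Equiv.Perm (G × G) := MulAction.toPermHom (G × G) (G × G)

def SW (G : Type*) : Equiv.Perm (G × G) := Equiv.prodComm G G

lemma LA_apply {G : Type*} [Group G] (g x : G × G) : LA G g x = g * x := rfl

lemma SW_sq (G : Type*) : SW G * SW G = 1 := by ext x <;> rfl

lemma SW_LA {G : Type*} [Group G] (g h : G) : SW G * LA G (g, h) = LA G (h, g) * SW G := by
  ext x <;> rfl

def AW (r i : ℕ) : P0 r := PresentedGroup.mk (P0Rels r) (aW r i)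

def psiGen (r : ℕ) : P1Gen r → Equiv.Perm (P0 r × P0 r)
  | P1Gen.a i => LA _ (AW r (i + 1), AW r (i + 1))
  | P1Gen.b i => LA _ (AW r (i + 1), 1)
  | P1Gen.c i => LA _ (1, AW r (i + 1))
  | P1Gen.d i => SW _ * LA _ (AW r (i + 1), AW r (i + 1))
  | P1Gen.f0 => SW _
  | P1Gen.h t => LA _ (AW r t.1.2.1, AW r t.1.2.2)

lemma AW_sq (r i : ℕ) (hr : 2 ≤ r) : AW r i * AW r i = 1 := by
  by_cases h : InR r i
  · obtain ⟨g, hg⟩ := aW_in r i h hr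
    unfold AW
    rw [hg, ← map_mul]
    exact P0_one (Or.inl (Or.inl ⟨g, rfl⟩))
  · unfold AW; rw [aW_out r i h hr]; simp

lemma AW_out (r i : ℕ) (h : ¬ InR r i) (hr : 2 ≤ r) : AW r i = 1 := by
  unfold AW; rw [aW_out r i h hr]; simp

lemma psi_a (r i : ℕ) (hr : 2 ≤ r) :
    FreeGroup.lift (psiGen r) (aw r i) = LA _ (AW r i, AW r i) := by
  unfold aw
  split_ifs with h
  · rw [FreeGroup.lift_apply_of]
    simp only [psiGen, Nat.sub_add_cancel h.1]
  · rw [AW_out r i h hr, map_one]; exact (map_one _).symm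

lemma psi_b (r i : ℕ) (hr : 2 ≤ r) :
    FreeGroup.lift (psiGen r) (bw r i) = LA _ (AW r i, 1) := by
  unfold bw
  split_ifs with h
  · rw [FreeGroup.lift_apply_of]
    simp only [psiGen, Nat.sub_add_cancel h.1]
  · rw [AW_out r i h hr, map_one]; exact (map_one _).symm

lemma psi_c (r i : ℕ) (hr : 2 ≤ r) :
    FreeGroup.lift (psiGen r) (cw r i) = LA _ (1, AW r i) := by
  unfold cw
  split_ifs with h
  · rw [FreeGroup.lift_apply_of]
    simp only [psiGen, Nat.sub_add_cancel h.1]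
  · rw [AW_out r i h hr, map_one]; exact (map_one _).symm

lemma psi_d (r i : ℕ) (h : InR r i) :
    FreeGroup.lift (psiGen r) (dw r i) = SW _ * LA _ (AW r i, AW r i) := by
  unfold InR at h
  unfold dw
  rw [dif_pos h, FreeGroup.lift_apply_of]
  simp only [psiGen, Nat.sub_add_cancel h.1]

lemma psi_f (r : ℕ) : FreeGroup.lift (psiGen r) (fw r) = SW _ := by
  unfold fw
  rw [FreeGroup.lift_apply_of]
  rfl

lemma LA_sq {G : Type*} [Group G] {g h : G} (hg : g * g = 1) (hh : h * h = 1) :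
    LA G (g, h) * LA G (g, h) = 1 := by
  rw [← map_mul, Prod.mk_mul_mk, hg, hh]; exact map_one _

lemma AW_conj (r i j k : ℕ) (h : (i, j, k) ∈ Cset r) :
    AW r i * AW r j * AW r i = AW r k := by
  have : PresentedGroup.mk (P0Rels r) (aW r i * aW r j * aW r i * (aW r k)⁻¹) = 1 := by
    rcases h with h | h
    · exact P0_one (Or.inl (Or.inr h))
    · exact P0_one (Or.inr h)
  rw [map_mul, map_inv, mul_inv_eq_one, map_mul, map_mul] at this
  exact this

lemma psi_rels (r : ℕ) (hr : 2 ≤ r) : ∀ w ∈ P1Rels r, FreeGroup.lift (psiGen r) w = 1 := by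
  intro w hw
  rcases hw with (⟨g, rfl⟩ | hw) | hw
  · simp only [map_mul, FreeGroup.lift_apply_of]
    cases g with
    | a i => exact LA_sq (AW_sq _ _ hr) (AW_sq _ _ hr)
    | b i => exact LA_sq (AW_sq _ _ hr) (one_mul _)
    | c i => exact LA_sq (one_mul _) (AW_sq _ _ hr)
    | d i =>
      simp only [psiGen]
      nth_rw 1 [SW_LA]
      rw [mul_assoc, ← mul_assoc (SW _), SW_sq, one_mul]
      exact LA_sq (AW_sq _ _ hr) (AW_sq _ _ hr)
    | f0 => exact SW_sq _
    | h t => exact LA_sq (AW_sq _ _ hr) (AW_sq _ _ hr)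
  · simp only [Set.mem_iUnion] at hw
    obtain ⟨i, hi, hw⟩ := hw
    have hi : InR r i := Finset.mem_Icc.1 hi
    simp only [Set.mem_insert_iff, Set.mem_singleton_iff] at hw
    rcases hw with rfl | rfl | rfl
    · rw [map_mul, map_inv, mul_inv_eq_one, map_mul, psi_a r i hr, psi_b r i hr, psi_c r i hr,
        ← map_mul]
      simp
    · rw [map_mul, map_inv, mul_inv_eq_one, map_mul, psi_a r i hr, psi_d r i hi, psi_f,
        ← mul_assoc, SW_sq, one_mul]
    · rw [map_mul, map_inv, mul_inv_eq_one, map_mul, map_mul, psi_b r i hr, psi_c r i hr, psi_f,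
        SW_LA, mul_assoc, SW_sq, mul_one]
  · simp only [Set.mem_iUnion] at hw
    obtain ⟨⟨⟨i, j, k⟩, ht⟩, hw⟩ := hw
    have hi : InR r i := Cset_fst_in r hr _ ht
    simp only [Set.mem_insert_iff, Set.mem_singleton_iff] at hw
    rcases hw with rfl | rfl
    · rw [map_mul, map_mul, psi_b r j hr, psi_c r k hr, _root_.hw, FreeGroup.lift_apply_of]
      simp only [psiGen]
      rw [← map_mul, ← map_mul]
      simp [AW_sq r _ hr]
      exact map_one _
    · rw [map_mul, map_inv, mul_inv_eq_one, map_mul, map_mul, psi_b r j hr, psi_c r k hr,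
        psi_d r i hi]
      rw [← AW_conj r i j k ht, mul_assoc (SW _), ← map_mul, Prod.mk_mul_mk, SW_LA,
        mul_assoc, ← mul_assoc (SW _), SW_sq, one_mul, ← map_mul, Prod.mk_mul_mk, mul_one,
        AW_sq r i hr]

/-- `𝒫₀` embeds into `𝒫₁`: there is an injective group homomorphism
`φ : 𝒫₀ → 𝒫₁` mapping each (relabelled) generator `a_i` of `𝒫₀` to the generator `a_i`
of `𝒫₁`. -/
theorem stmt_5 (r : ℕ) (hr : 2 ≤ r) :
    ∃ φ : P0 r →* P1 r, Function.Injective φ ∧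
      ∀ i ∈ Finset.Icc 1 (r + 5),
        φ (PresentedGroup.mk (P0Rels r) (aW r i)) = PresentedGroup.mk (P1Rels r) (aw r i) := by
  
  have h0 : ∀ i, InR r i → PresentedGroup.toGroup (phi_rels r hr)
      (PresentedGroup.mk (P0Rels r) (aW r i)) = PresentedGroup.mk (P1Rels r) (aw r i) :=
    fun i hi => lift_aW r i hr hi
  refine ⟨PresentedGroup.toGroup (phi_rels r hr), ?_, fun i hi => h0 i (Finset.mem_Icc.1 hi)⟩
  let Ψ : P1 r →* Equiv.Perm (P0 r × P0 r) := PresentedGroup.toGroup (psi_rels r hr)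
  have hcomp : Ψ.comp (PresentedGroup.toGroup (phi_rels r hr)) =
      (LA (P0 r)).comp ((MonoidHom.id _).prod (MonoidHom.id _)) := by
    have hg : ∀ i, InR r i → Ψ (PresentedGroup.toGroup (phi_rels r hr)
        (PresentedGroup.mk (P0Rels r) (aW r i))) =
        LA _ (PresentedGroup.mk (P0Rels r) (aW r i), PresentedGroup.mk (P0Rels r) (aW r i)) := by
      intro i hi
      rw [h0 i hi]
      exact psi_a r i hr
    refine PresentedGroup.ext fun g => ?_
    cases g with
    | o k =>
      have h := hg (oIx (k + 1)) (oIx_in (by omega) (by omega))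
      rw [← oW_eq] at h
      unfold oW at h
      rw [dif_pos (by omega)] at h
      exact h
    | u k =>
      have h := hg (k + 1 + 2) (by unfold InR; omega)
      rw [← uW_eq _ _ (by omega) (by omega)] at h
      unfold uW at h
      rw [dif_pos (by omega)] at h
      exact h
  intro x y hxy
  have h1 : ∀ z, Ψ (PresentedGroup.toGroup (phi_rels r hr) z) = LA _ (z, z) :=
    fun z => DFunLike.congr_fun hcomp z
  have h2 : LA (P0 r) (x, x) = LA _ (y, y) := by rw [← h1, ← h1, hxy]
  have h3 := congrArg (fun p => (p (1, 1)).1) h2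
  simpa [LA_apply] using h3
end

section
/- There exists an injective group homomorphism φ : 𝒫₁ → Γ mapping each generator of 𝒫₁ (each a_i, b_i, c_i, d_i, f₀, and each h_{jk}) to the same-named generator of Γ; that is, 𝒫₁ embeds into Γ. -/
/-- The generators of the solution group `Γ`: `a_i, b_i, c_i, d_i, p_{i,1}, …, p_{i,5}`
(`1 ≤ i ≤ r+5`), `f₀, f₁, f₂, g₀, g₁, g₂, m₀, m₁, m₂`, `h_{jk}` and `q_{c,1}, …, q_{c,6}`
(one family for each `c = (i,j,k) ∈ C(r)`), together with the central generator `J`. -/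
inductive GaGen (r : ℕ) : Type
  | a : Fin (r + 5) → GaGen r
  | b : Fin (r + 5) → GaGen r
  | c : Fin (r + 5) → GaGen r
  | d : Fin (r + 5) → GaGen r
  | p : Fin (r + 5) → Fin 5 → GaGen r
  | f : Fin 3 → GaGen r
  | g : Fin 3 → GaGen r
  | m : Fin 3 → GaGen r
  | h : {t : ℕ × ℕ × ℕ // t ∈ Cset r} → GaGen r
  | q : {t : ℕ × ℕ × ℕ // t ∈ Cset r} → Fin 6 → GaGen r
  | J : GaGen r

/-- The free-group letter `a_i` of `Γ` (`1 ≤ i ≤ r+5`; junk value `1` out of range). -/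
def ga (r : ℕ) (i : ℕ) : FreeGroup (GaGen r) :=
  if h : 1 ≤ i ∧ i ≤ r + 5 then FreeGroup.of (GaGen.a ⟨i - 1, by omega⟩) else 1

/-- The free-group letter `b_i` of `Γ`. -/
def gb (r : ℕ) (i : ℕ) : FreeGroup (GaGen r) :=
  if h : 1 ≤ i ∧ i ≤ r + 5 then FreeGroup.of (GaGen.b ⟨i - 1, by omega⟩) else 1

/-- The free-group letter `c_i` of `Γ`. -/
def gc (r : ℕ) (i : ℕ) : FreeGroup (GaGen r) :=
  if h : 1 ≤ i ∧ i ≤ r + 5 then FreeGroup.of (GaGen.c ⟨i - 1, by omega⟩) else 1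

/-- The free-group letter `d_i` of `Γ`. -/
def gd (r : ℕ) (i : ℕ) : FreeGroup (GaGen r) :=
  if h : 1 ≤ i ∧ i ≤ r + 5 then FreeGroup.of (GaGen.d ⟨i - 1, by omega⟩) else 1

/-- The free-group letter `p_{i,l}` of `Γ` (`1 ≤ i ≤ r+5`, `1 ≤ l ≤ 5`). -/
def gp (r : ℕ) (i l : ℕ) : FreeGroup (GaGen r) :=
  if h : (1 ≤ i ∧ i ≤ r + 5) ∧ (1 ≤ l ∧ l ≤ 5) then
    FreeGroup.of (GaGen.p ⟨i - 1, by omega⟩ ⟨l - 1, by omega⟩) else 1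

/-- The free-group letter `f_l` of `Γ` (`0 ≤ l ≤ 2`). -/
def gf (r : ℕ) (l : ℕ) : FreeGroup (GaGen r) :=
  if h : l ≤ 2 then FreeGroup.of (GaGen.f ⟨l, by omega⟩) else 1

/-- The free-group letter `g_l` of `Γ` (`0 ≤ l ≤ 2`). -/
def gg (r : ℕ) (l : ℕ) : FreeGroup (GaGen r) :=
  if h : l ≤ 2 then FreeGroup.of (GaGen.g ⟨l, by omega⟩) else 1

/-- The free-group letter `m_l` of `Γ` (`0 ≤ l ≤ 2`). -/
def gm (r : ℕ) (l : ℕ) : FreeGroup (GaGen r) :=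
  if h : l ≤ 2 then FreeGroup.of (GaGen.m ⟨l, by omega⟩) else 1

/-- The free-group letter `h_{jk}` of `Γ`, for `(i,j,k) ∈ C(r)`. -/
def gh (r : ℕ) (t : {t : ℕ × ℕ × ℕ // t ∈ Cset r}) : FreeGroup (GaGen r) :=
  FreeGroup.of (GaGen.h t)

/-- The free-group letter `q_{c,l}` of `Γ`, for `c ∈ C(r)` and `1 ≤ l ≤ 6`. -/
def gq (r : ℕ) (t : {t : ℕ × ℕ × ℕ // t ∈ Cset r}) (l : ℕ) : FreeGroup (GaGen r) :=
  if h : 1 ≤ l ∧ l ≤ 6 then FreeGroup.of (GaGen.q t ⟨l - 1, by omega⟩) else 1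

/-- The free-group letter `J` of `Γ`. -/
def gJ (r : ℕ) : FreeGroup (GaGen r) := FreeGroup.of GaGen.J

/-- The relators of `Γ` corresponding to the linear equations of the binary linear
system: for each `1 ≤ i ≤ r+5` the relations `a_i = b_i c_i`, `a_i = f₀ d_i`,
`f₀f₁f₂ = e`, `b_i f₂ p_{i,1} = e`, `p_{i,1}p_{i,2}p_{i,3} = e`, `f₀p_{i,3}p_{i,4} = e`,
`c_i p_{i,4} p_{i,5} = e`, `f₁ p_{i,2} p_{i,5} = e`; for each `c = (i,j,k) ∈ C(r)` the
relations `h_{jk} b_j c_k = e`, `d_i q_{c,1} f₂ = e`, `b_j f₂ q_{c,2} = e`,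
`q_{c,2}q_{c,3}q_{c,4} = e`, `d_i q_{c,4} q_{c,5} = e`, `c_k q_{c,5} q_{c,6} = e`,
`q_{c,1} q_{c,3} q_{c,6} = e`; and the Magic Square relations `g₀g₁g₂ = e`,
`m₀m₁m₂ = e`, `f₀g₂m₀ = e`, `f₂g₀m₁ = e`, `f₁g₁m₂ = J`. -/
def GaRelsLin (r : ℕ) : Set (FreeGroup (GaGen r)) :=
  (⋃ i ∈ Finset.Icc 1 (r + 5),
    ({gb r i * gc r i * (ga r i)⁻¹,
      gf r 0 * gd r i * (ga r i)⁻¹,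
      gf r 0 * gf r 1 * gf r 2,
      gb r i * gf r 2 * gp r i 1,
      gp r i 1 * gp r i 2 * gp r i 3,
      gf r 0 * gp r i 3 * gp r i 4,
      gc r i * gp r i 4 * gp r i 5,
      gf r 1 * gp r i 2 * gp r i 5} : Set (FreeGroup (GaGen r)))) ∪
  (⋃ t : {t : ℕ × ℕ × ℕ // t ∈ Cset r},
    ({gh r t * gb r t.1.2.1 * gc r t.1.2.2,
      gd r t.1.1 * gq r t 1 * gf r 2,
      gb r t.1.2.1 * gf r 2 * gq r t 2,
      gq r t 2 * gq r t 3 * gq r t 4,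
      gd r t.1.1 * gq r t 4 * gq r t 5,
      gc r t.1.2.2 * gq r t 5 * gq r t 6,
      gq r t 1 * gq r t 3 * gq r t 6} : Set (FreeGroup (GaGen r)))) ∪
  ({gg r 0 * gg r 1 * gg r 2,
    gm r 0 * gm r 1 * gm r 2,
    gf r 0 * gg r 2 * gm r 0,
    gf r 2 * gg r 0 * gm r 1,
    gf r 1 * gg r 1 * gm r 2 * (gJ r)⁻¹} : Set (FreeGroup (GaGen r)))

/-- All defining relations of `Γ`: `s² = e` for every generator (including `J² = e`),
`J s J s = e` for every generator `s ≠ J`, and the linear relators above. -/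
def GaRels (r : ℕ) : Set (FreeGroup (GaGen r)) :=
  (Set.range fun s : GaGen r => FreeGroup.of s * FreeGroup.of s) ∪
  ((fun s : GaGen r => gJ r * FreeGroup.of s * gJ r * FreeGroup.of s) ''
    {s : GaGen r | s ≠ GaGen.J}) ∪
  GaRelsLin r

/-- The solution group `Γ`, presented by the above generators and relations. -/
abbrev Ga (r : ℕ) : Type := PresentedGroup (GaRels r)

set_option linter.unusedSimpArgs false

/-- Twisted permutation attached to an involutive automorphism of a subgroup. -/
theorem exists_twist {G : Type*} [Group G] (A : Subgroup G) (α : A → A)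
    (hmul : ∀ a b, α (a * b) = α a * α b) (hinv : ∀ a, α (α a) = a) :
    ∃ x : Equiv.Perm G, x * x = 1 ∧ ∀ (a : A) (g : G), x (a * g) = α a * x g := by
  let rep : G → G := fun g => (Quotient.mk (QuotientGroup.rightRel A) g).out
  have hrep : ∀ g, g * (rep g)⁻¹ ∈ A := by
    intro g
    have h : (QuotientGroup.rightRel A) (rep g) g := Quotient.mk_out (s := QuotientGroup.rightRel A) g
    exact QuotientGroup.rightRel_apply.1 h
  have hinva : ∀ (a : A) (g : G), rep (a * g) = rep g := by
    intro a g
    have : Quotient.mk (QuotientGroup.rightRel A) ((a : G) * g) = Quotient.mk (QuotientGroup.rightRel A) g := by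
      apply Quotient.sound
      show (QuotientGroup.rightRel A) _ _
      rw [QuotientGroup.rightRel_apply]
      simp
    show Quotient.out _ = Quotient.out _
    rw [this]
  let f : G → G := fun g => (α ⟨g * (rep g)⁻¹, hrep g⟩ : G) * rep g
  have hrf : ∀ g, rep (f g) = rep g := by
    intro g
    have h1 : rep (f g) = rep (rep g) := hinva _ _
    have h2 := hinva ⟨g * (rep g)⁻¹, hrep g⟩ (rep g)
    simp only [inv_mul_cancel_right] at h2
    rw [h1, ← h2]
  have hff : ∀ g, f (f g) = g := by
    intro g
    have : (⟨f g * (rep (f g))⁻¹, hrep (f g)⟩ : A) = α ⟨g * (rep g)⁻¹, hrep g⟩ := by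
      apply Subtype.ext
      show f g * (rep (f g))⁻¹ = _
      rw [hrf]
      show _ * rep g * _ = _
      rw [mul_inv_cancel_right]
    show (α ⟨f g * (rep (f g))⁻¹, hrep (f g)⟩ : G) * rep (f g) = g
    rw [this, hinv, hrf]
    simp
  refine ⟨⟨f, f, hff, hff⟩, ?_, ?_⟩
  · ext g
    exact hff g
  · intro a g
    show (α ⟨a * g * (rep (a * g))⁻¹, hrep (a * g)⟩ : G) * rep (a * g) = α a * (α ⟨g * (rep g)⁻¹, hrep g⟩ * rep g)
    have : (⟨a * g * (rep (a * g))⁻¹, hrep (a * g)⟩ : A) = a * ⟨g * (rep g)⁻¹, hrep g⟩ := by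
      apply Subtype.ext
      simp [hinva, mul_assoc]
    rw [this, hmul, hinva]
    simp [mul_assoc]

theorem exists_twist2 {G : Type*} [Group G] (s t : G) (χ : G →* ℤˣ)
    (hs : s * s = 1) (ht : t * t = 1) (hst : s * t = t * s) (hχ : χ t = 1) :
    ∃ x : Equiv.Perm G, x * x = 1 ∧ ∀ g, g * t = t * g →
      x * MulAction.toPermHom G G g =
        MulAction.toPermHom G G (s * g * s * (if χ g = 1 then 1 else t)) * x := by
  have htau : ∀ g : G, (if χ g = 1 then 1 else t : G) ∈ Subgroup.centralizer {t} := by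
    intro g
    split_ifs
    · exact one_mem _
    · rw [Subgroup.mem_centralizer_singleton_iff]
  have hsm : s ∈ Subgroup.centralizer {t} := by
    rw [Subgroup.mem_centralizer_singleton_iff]; exact hst
  have hχs : ∀ g, χ (s * g * s * (if χ g = 1 then 1 else t)) = χ g := by
    intro g
    have : χ s * χ s = 1 := by rw [← map_mul, hs, map_one]
    have h3 : χ (if χ g = 1 then 1 else t) = 1 := by split_ifs <;> simp [hχ]
    rw [map_mul, h3, mul_one, map_mul, map_mul, mul_right_comm, this, one_mul]
  have hss : ∀ u, s * (s * u) = u := fun u => by rw [← mul_assoc, hs, one_mul]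
  have htt : ∀ u, t * (t * u) = u := fun u => by rw [← mul_assoc, ht, one_mul]
  have hts : ∀ u, t * (s * u) = s * (t * u) := fun u => by rw [← mul_assoc, ← hst, mul_assoc]
  obtain ⟨x, hx, hx2⟩ := exists_twist (Subgroup.centralizer {t})
    (fun a => ⟨s * a * s * (if χ a = 1 then 1 else t),
      mul_mem (mul_mem (mul_mem hsm a.2) hsm) (htau a)⟩) (by
      rintro ⟨a, ha⟩ ⟨b, hb⟩
      rw [Subgroup.mem_centralizer_singleton_iff] at ha hb
      have hb' : ∀ u, t * (b * u) = b * (t * u) := fun u => by rw [← mul_assoc, ← hb, mul_assoc]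
      apply Subtype.ext
      simp only [Subgroup.coe_mul, map_mul]
      rcases Int.units_eq_one_or (χ a) with h1 | h1 <;>
      rcases Int.units_eq_one_or (χ b) with h2 | h2 <;>
      simp [h1, h2, mul_assoc, hss, hts, hb', ht, ← hst, htt]) (by
      rintro ⟨a, ha⟩
      rw [Subgroup.mem_centralizer_singleton_iff] at ha
      apply Subtype.ext
      simp only [hχs]
      rcases Int.units_eq_one_or (χ a) with h1 | h1 <;>
      simp [h1, mul_assoc, hss, hts, hs, ht, ← hst, htt])
  refine ⟨x, hx, fun g hg => ?_⟩
  ext u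
  exact hx2 ⟨g, Subgroup.mem_centralizer_singleton_iff.2 hg⟩ u

theorem assoc_rule {K : Type*} [Group K] {a b w : K} (h : a * b = w) (u : K) :
    a * (b * u) = w * u := by rw [← mul_assoc, h]

theorem gadgetP {K : Type*} [Group K] (b c f z x : K) (hb : b * b = 1) (hc : c * c = 1)
    (hf : f * f = 1) (hz : z * z = 1) (hx : x * x = 1) (zb : z * b = b * z) (zc : z * c = c * z)
    (zf : z * f = f * z) (cb : c * b = b * c) (bf : b * f = f * c) (cf : c * f = f * b)
    (xf : x * f = f * x) (xb : x * b = c * x) (xc : x * c = b * x) (xz : x * z = b * (c * (z * x))) :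
    ((b * z) * (b * z) = 1 ∧ (b * z * x) * (b * z * x) = 1 ∧ (f * x) * (f * x) = 1 ∧
      (f * b * x) * (f * b * x) = 1) ∧
    b * z * (b * z) = 1 ∧ (b * z) * (b * z * x) * x = 1 ∧ f * x * (f * x) = 1 ∧
    c * (f * x) * (f * b * x) = 1 ∧ (f * z) * (b * z * x) * (f * b * x) = 1 := by
  have hb' := assoc_rule hb
  have hc' := assoc_rule hc
  have hf' := assoc_rule hf
  have hz' := assoc_rule hz
  have hx' := assoc_rule hx
  have zb' := assoc_rule zb
  have zc' := assoc_rule zc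
  have zf' := assoc_rule zf
  have cb' := assoc_rule cb
  have bf' := assoc_rule bf
  have cf' := assoc_rule cf
  have xf' := assoc_rule xf
  have xb' := assoc_rule xb
  have xc' := assoc_rule xc
  have xz' := assoc_rule xz
  refine ⟨⟨?_, ?_, ?_, ?_⟩, ?_, ?_, ?_, ?_, ?_⟩ <;>
  simp only [mul_assoc, one_mul, mul_one, hb, hc, hf, hz, hx, zb, zc, zf, cb, bf, cf, xf, xb, xc, xz,
    hb', hc', hf', hz', hx', zb', zc', zf', cb', bf', cf', xf', xb', xc', xz']

theorem gadgetQ {K : Type*} [Group K] (b c d z x : K) (hb : b * b = 1) (hc : c * c = 1)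
    (hd : d * d = 1) (hz : z * z = 1) (hx : x * x = 1) (zb : z * b = b * z) (zc : z * c = c * z)
    (zd : z * d = d * z) (cb : c * b = b * c) (bd : b * d = d * c) (cd : c * d = d * b)
    (xd : x * d = d * (b * (c * x))) (xb : x * b = c * x) (xc : x * c = b * x)
    (xz : x * z = b * (c * (z * x))) :
    ((d * z) * (d * z) = 1 ∧ (b * z) * (b * z) = 1 ∧ (b * z * x) * (b * z * x) = 1 ∧
      (d * b * z * x) * (d * b * z * x) = 1 ∧ (d * z * x) * (d * z * x) = 1) ∧
    d * (d * z) * z = 1 ∧ b * z * (b * z) = 1 ∧ (b * z) * x * (b * z * x) = 1 ∧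
    d * (b * z * x) * (d * b * z * x) = 1 ∧ c * (d * b * z * x) * (d * z * x) = 1 ∧
    (d * z) * x * (d * z * x) = 1 := by
  have hb' := assoc_rule hb
  have hc' := assoc_rule hc
  have hd' := assoc_rule hd
  have hz' := assoc_rule hz
  have hx' := assoc_rule hx
  have zb' := assoc_rule zb
  have zc' := assoc_rule zc
  have zd' := assoc_rule zd
  have cb' := assoc_rule cb
  have bd' := assoc_rule bd
  have cd' := assoc_rule cd
  have xd' := assoc_rule xd
  have xb' := assoc_rule xb
  have xc' := assoc_rule xc
  have xz' := assoc_rule xz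
  refine ⟨⟨?_, ?_, ?_, ?_, ?_⟩, ?_, ?_, ?_, ?_, ?_, ?_⟩ <;>
  simp only [mul_assoc, one_mul, mul_one, hb, hc, hd, hz, hx, zb, zc, zd, cb, bd, cd, xd, xb, xc, xz,
    hb', hc', hd', hz', hx', zb', zc', zd', cb', bd', cd', xd', xb', xc', xz']

theorem tri {K : Type*} [Group K] {x y w : K} (hw : w * w = 1) (h : x * y * w = 1) : x * y = w := by
  rw [mul_eq_one_iff_eq_inv] at h
  rw [h, inv_eq_of_mul_eq_one_left hw]

theorem sw {K : Type*} [Group K] {x y w : K} (hx : x * x = 1) (h : x * y = w) : y = x * w := by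
  rw [← h, ← mul_assoc, hx, one_mul]

theorem sw2 {K : Type*} [Group K] {x y w : K} (hy : y * y = 1) (h : x * y = w) : x = w * y := by
  rw [← h, mul_assoc, hy, mul_one]

theorem deriveP {K : Type*} [Group K] (b c f0 f1 f2 p1 p2 p3 p4 p5 : K) (hc : c * c = 1)
    (hf0 : f0 * f0 = 1) (hf2 : f2 * f2 = 1) (hp1 : p1 * p1 = 1) (hp2 : p2 * p2 = 1)
    (hp3 : p3 * p3 = 1) (hp4 : p4 * p4 = 1) (hp5 : p5 * p5 = 1)
    (h1 : f0 * f1 * f2 = 1) (h2 : b * f2 * p1 = 1) (h3 : p1 * p2 * p3 = 1)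
    (h4 : f0 * p3 * p4 = 1) (h5 : c * p4 * p5 = 1) (h6 : f1 * p2 * p5 = 1) :
    f0 * b * f0 = c := by
  have e1 := sw2 hf2 (tri hp1 h2)
  have e2 := sw2 hp2 (tri hp3 h3)
  have e3 := sw hf0 (tri hp4 h4)
  have e4 := sw hc (tri hp5 h5)
  have e5 := tri hp5 h6
  have e6 : f1 * f2 = f0 := by
    have := sw hf0 ((mul_assoc _ _ _).symm.trans h1)
    rwa [mul_one] at this
  rw [e1, e2, e3, e4, ← e5]
  calc f0 * (f0 * (c * (f1 * p2)) * p2 * f2) * f0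
      = (f0 * f0) * c * (f1 * (p2 * p2) * f2) * f0 := by simp only [mul_assoc]
    _ = c := by rw [hf0, hp2, mul_one, one_mul, e6, mul_assoc, hf0, mul_one]

theorem deriveQ {K : Type*} [Group K] (b c d f2 q1 q2 q3 q4 q5 q6 : K) (hc : c * c = 1)
    (hd : d * d = 1) (hf2 : f2 * f2 = 1) (hq2 : q2 * q2 = 1)
    (hq3 : q3 * q3 = 1) (hq4 : q4 * q4 = 1) (hq5 : q5 * q5 = 1) (hq6 : q6 * q6 = 1)
    (h1 : d * q1 * f2 = 1) (h2 : b * f2 * q2 = 1) (h3 : q2 * q3 * q4 = 1)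
    (h4 : d * q4 * q5 = 1) (h5 : c * q5 * q6 = 1) (h6 : q1 * q3 * q6 = 1) :
    d * b * d = c := by
  have e1 := sw2 hf2 (tri hq2 h2)
  have e2 := sw2 hq3 (tri hq4 h3)
  have e3 := sw hd (tri hq5 h4)
  have e4 := sw hc (tri hq6 h5)
  have e5 := tri hq6 h6
  have e6 := sw hd (tri hf2 h1)
  rw [e1, e2, e3, e4, ← e5, e6]
  calc d * (d * (c * (d * f2 * q3)) * q3 * f2) * d
      = (d * d) * c * (d * (f2 * (q3 * q3) * f2)) * d := by simp only [mul_assoc]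
    _ = c := by rw [hd, hq3, mul_one, one_mul, hf2, mul_one, mul_assoc, hd, mul_one]

/-- Left regular embedding of the first factor. -/
def Lam (P : Type*) [Group P] : P →* Equiv.Perm (P × ℤˣ) :=
  (MulAction.toPermHom (P × ℤˣ) (P × ℤˣ)).comp (MonoidHom.inl P ℤˣ)

/-- The central involution. -/
def Zet (P : Type*) [Group P] : Equiv.Perm (P × ℤˣ) :=
  MulAction.toPermHom (P × ℤˣ) (P × ℤˣ) (1, -1)

theorem Lam_inj (P : Type*) [Group P] : Function.Injective (Lam P) := by
  intro x y h
  have h2 := congrArg (fun e : Equiv.Perm (P × ℤˣ) => (e 1).1) h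
  simpa [Lam] using h2

theorem Zet_sq (P : Type*) [Group P] : Zet P * Zet P = 1 := by
  rw [Zet, ← map_mul]
  simp only [Prod.mk_mul_mk, one_mul, mul_neg, neg_neg]
  exact map_one _

theorem Zet_comm (P : Type*) [Group P] (w : P) : Zet P * Lam P w = Lam P w * Zet P := by
  simp only [Zet, Lam, MonoidHom.comp_apply, ← map_mul]
  simp

theorem Lam_sq {P : Type*} [Group P] {w : P} (h : w * w = 1) : Lam P w * Lam P w = 1 := by
  rw [← map_mul, h, map_one]

theorem conj_comm {P : Type*} [Group P] {b c f : P} (hf : f * f = 1) (h : f * b * f = c) :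
    b * f = f * c ∧ c * f = f * b := by
  subst h
  constructor
  · simp only [← mul_assoc, hf, one_mul]
  · simp only [mul_assoc, hf, mul_one]

theorem existsP {P : Type*} [Group P] (b c f : P) (hb : b * b = 1) (hc : c * c = 1)
    (hf : f * f = 1) (cb : c * b = b * c) (hconj : f * b * f = c) :
    ∃ x : Equiv.Perm (P × ℤˣ), x * x = 1 ∧ x * Lam P f = Lam P f * x ∧
      x * Lam P b = Lam P c * x ∧ x * Lam P c = Lam P b * x ∧
      x * Zet P = Lam P b * (Lam P c * (Zet P * x)) := by
  obtain ⟨bf, cf⟩ := conj_comm hf hconj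
  have st : f * (b * c) = b * c * f := by
    rw [mul_assoc, cf, ← mul_assoc, ← mul_assoc, bf, mul_assoc, mul_assoc, cb]
  have tt : b * c * (b * c) = 1 := by
    nth_rw 1 [← cb]; rw [mul_assoc, assoc_rule hb, one_mul, hc]
  have hconj2 : f * c * f = b := by rw [← bf, mul_assoc, hf, mul_one]
  have hb' := assoc_rule hb
  have cb' := assoc_rule cb
  obtain ⟨x, hx, H⟩ := exists_twist2 (G := P × ℤˣ) (f, 1) (b * c, 1) (MonoidHom.snd P ℤˣ)
    (by simp [hf]) (by simp only [Prod.mk_mul_mk, tt, mul_one]; rfl)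
    (by simp only [Prod.mk_mul_mk, st]) rfl
  refine ⟨x, hx, ?_, ?_, ?_, ?_⟩
  · have := H (f, 1) (by simp only [Prod.mk_mul_mk, st])
    simpa [hf, Lam] using this
  · have := H (b, 1) (by simp [mul_assoc, cb])
    simpa [hconj, Lam] using this
  · have := H (c, 1) (by simp [mul_assoc, cb'])
    simpa [hconj2, Lam] using this
  · have := H (1, -1) (by simp)
    rw [Zet, this]
    simp only [Lam, MonoidHom.comp_apply, ← map_mul, ← mul_assoc]
    simp [hf]

theorem existsQ {P : Type*} [Group P] (b c d : P) (ε : P →* ℤˣ) (hb : b * b = 1) (hc : c * c = 1)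
    (hd : d * d = 1) (cb : c * b = b * c) (hconj : d * b * d = c) (εb : ε b = 1) (εc : ε c = 1)
    (εd : ε d = -1 ∨ d = 1) :
    ∃ x : Equiv.Perm (P × ℤˣ), x * x = 1 ∧ x * Lam P d = Lam P d * (Lam P b * (Lam P c * x)) ∧
      x * Lam P b = Lam P c * x ∧ x * Lam P c = Lam P b * x ∧
      x * Zet P = Lam P b * (Lam P c * (Zet P * x)) := by
  obtain ⟨bd, cd⟩ := conj_comm hd hconj
  have st : d * (b * c) = b * c * d := by
    rw [mul_assoc, cd, ← mul_assoc, ← mul_assoc, bd, mul_assoc, mul_assoc, cb]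
  have tt : b * c * (b * c) = 1 := by
    nth_rw 1 [← cb]; rw [mul_assoc, assoc_rule hb, one_mul, hc]
  have hconj2 : d * c * d = b := by rw [← bd, mul_assoc, hd, mul_one]
  have hb' := assoc_rule hb
  have cb' := assoc_rule cb
  obtain ⟨x, hx, H⟩ := exists_twist2 (G := P × ℤˣ) (d, 1) (b * c, 1)
    (ε.comp (MonoidHom.fst P ℤˣ) * MonoidHom.snd P ℤˣ)
    (by simp [hd]) (by simp only [Prod.mk_mul_mk, tt, mul_one]; rfl)
    (by simp only [Prod.mk_mul_mk, st]) (by simp [εb, εc])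
  refine ⟨x, hx, ?_, ?_, ?_, ?_⟩
  · have := H (d, 1) (by simp only [Prod.mk_mul_mk, st])
    have h1 : (Lam P d * (Lam P b * (Lam P c * x))) = Lam P (d * (b * c)) * x := by
      simp only [map_mul, mul_assoc]
    rw [h1]
    refine Eq.trans this ?_
    rcases εd with h | h
    · simp [hd, Lam, h]
    · subst h
      have : b = c := by simpa using hconj
      subst this
      simp [Lam, hb]
  · have := H (b, 1) (by simp [mul_assoc, cb])
    simpa [hconj, Lam, εb] using this
  · have := H (c, 1) (by simp [mul_assoc, cb'])
    simpa [hconj2, Lam, εc] using this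
  · have := H (1, -1) (by simp)
    rw [Zet, this]
    simp only [Lam, MonoidHom.comp_apply, ← map_mul, ← mul_assoc]
    simp [hd]

set_option maxHeartbeats 2000000 in
/-- `𝒫₁` embeds into the solution group `Γ`: there is an injective group
homomorphism `φ : 𝒫₁ → Γ` mapping each generator of `𝒫₁` (each `a_i`, `b_i`, `c_i`,
`d_i`, `f₀`, and each `h_{jk}`) to the same-named generator of `Γ`. -/
theorem stmt_7 (r : ℕ) (hr : 2 ≤ r) :
    ∃ φ : P1 r →* Ga r, Function.Injective φ ∧
      (∀ i ∈ Finset.Icc 1 (r + 5),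
        φ (PresentedGroup.mk (P1Rels r) (aw r i)) = PresentedGroup.mk (GaRels r) (ga r i) ∧
        φ (PresentedGroup.mk (P1Rels r) (bw r i)) = PresentedGroup.mk (GaRels r) (gb r i) ∧
        φ (PresentedGroup.mk (P1Rels r) (cw r i)) = PresentedGroup.mk (GaRels r) (gc r i) ∧
        φ (PresentedGroup.mk (P1Rels r) (dw r i)) = PresentedGroup.mk (GaRels r) (gd r i)) ∧
      φ (PresentedGroup.mk (P1Rels r) (fw r)) = PresentedGroup.mk (GaRels r) (gf r 0) ∧
      ∀ t : {t : ℕ × ℕ × ℕ // t ∈ Cset r},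
        φ (PresentedGroup.mk (P1Rels r) (hw r t)) = PresentedGroup.mk (GaRels r) (gh r t) := by
  classical
  -- facts in `P1`
  have r1 : ∀ w ∈ P1Rels r, PresentedGroup.mk (P1Rels r) w = 1 := fun w hw =>
    PresentedGroup.one_of_mem hw
  have s1 : ∀ g : P1Gen r, PresentedGroup.mk (P1Rels r) (FreeGroup.of g) *
      PresentedGroup.mk (P1Rels r) (FreeGroup.of g) = 1 := fun g => by
    rw [← map_mul]
    exact r1 _ (Or.inl (Or.inl ⟨g, rfl⟩))
  obtain ⟨A, hA⟩ : ∃ A : ℕ → P1 r, A = fun i => PresentedGroup.mk (P1Rels r) (aw r i) := ⟨_, rfl⟩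
  obtain ⟨B, hB⟩ : ∃ A : ℕ → P1 r, A = fun i => PresentedGroup.mk (P1Rels r) (bw r i) := ⟨_, rfl⟩
  obtain ⟨C, hC⟩ : ∃ A : ℕ → P1 r, A = fun i => PresentedGroup.mk (P1Rels r) (cw r i) := ⟨_, rfl⟩
  obtain ⟨D, hD⟩ : ∃ A : ℕ → P1 r, A = fun i => PresentedGroup.mk (P1Rels r) (dw r i) := ⟨_, rfl⟩
  obtain ⟨F, hF⟩ : ∃ A : P1 r, A = PresentedGroup.mk (P1Rels r) (fw r) := ⟨_, rfl⟩
  obtain ⟨H, hH⟩ : ∃ A : {t : ℕ × ℕ × ℕ // t ∈ Cset r} → P1 r,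
    A = fun t => PresentedGroup.mk (P1Rels r) (hw r t) := ⟨_, rfl⟩
  have sA : ∀ i, A i * A i = 1 := by
    intro i; simp only [hA, aw]; split_ifs
    · exact s1 _
    · simp
  have sB : ∀ i, B i * B i = 1 := by
    intro i; simp only [hB, bw]; split_ifs
    · exact s1 _
    · simp
  have sC : ∀ i, C i * C i = 1 := by
    intro i; simp only [hC, cw]; split_ifs
    · exact s1 _
    · simp
  have sD : ∀ i, D i * D i = 1 := by
    intro i; simp only [hD, dw]; split_ifs
    · exact s1 _
    · simp
  have sF : F * F = 1 := by rw [hF]; exact s1 _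
  have sH : ∀ t, H t * H t = 1 := by intro t; rw [hH]; exact s1 _
  have rA : ∀ i ∈ Finset.Icc 1 (r + 5), ∀ w ∈ ({bw r i * cw r i * (aw r i)⁻¹,
      fw r * dw r i * (aw r i)⁻¹,
      fw r * bw r i * fw r * (cw r i)⁻¹} : Set (FreeGroup (P1Gen r))),
      PresentedGroup.mk (P1Rels r) w = 1 := fun i hi w hw =>
    r1 _ (Or.inl (Or.inr (Set.mem_biUnion (x := i) (by simpa using hi) hw)))
  have rT : ∀ t : {t : ℕ × ℕ × ℕ // t ∈ Cset r}, ∀ w ∈ ({hw r t * bw r t.1.2.1 * cw r t.1.2.2,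
      dw r t.1.1 * bw r t.1.2.1 * dw r t.1.1 * (cw r t.1.2.2)⁻¹} : Set (FreeGroup (P1Gen r))),
      PresentedGroup.mk (P1Rels r) w = 1 := fun t w hw =>
    r1 _ (Or.inr (Set.mem_iUnion.2 ⟨t, hw⟩))
  have eBC : ∀ i ∈ Finset.Icc 1 (r + 5), B i * C i = A i := fun i hi => by
    have := rA i hi _ (Or.inl rfl)
    rw [map_mul, map_inv, mul_inv_eq_one, map_mul] at this
    simpa only [hA, hB, hC] using this
  have eFD : ∀ i ∈ Finset.Icc 1 (r + 5), F * D i = A i := fun i hi => by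
    have := rA i hi _ (Or.inr (Or.inl rfl))
    rw [map_mul, map_inv, mul_inv_eq_one, map_mul] at this
    simpa only [hA, hF, hD] using this
  have eFBF : ∀ i ∈ Finset.Icc 1 (r + 5), F * B i * F = C i := fun i hi => by
    have := rA i hi _ (Or.inr (Or.inr rfl))
    rw [map_mul, map_inv, mul_inv_eq_one, map_mul, map_mul] at this
    simpa only [hB, hF, hC] using this
  have eH : ∀ t, H t * B t.1.2.1 * C t.1.2.2 = 1 := fun t => by
    have := rT t _ (Or.inl rfl)
    rw [map_mul, map_mul] at this
    simpa only [hB, hH, hC] using this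
  have eDBD : ∀ t : {t : ℕ × ℕ × ℕ // t ∈ Cset r}, D t.1.1 * B t.1.2.1 * D t.1.1 = C t.1.2.2 :=
    fun t => by
    have := rT t _ (Or.inr rfl)
    rw [map_mul, map_inv, mul_inv_eq_one, map_mul, map_mul] at this
    simpa only [hB, hD, hC] using this
  have comm : ∀ x y w : P1 r, x * x = 1 → y * y = 1 → w * w = 1 → x * y = w → y * x = x * y := by
    intro x y w hx hy hw h
    have h2 : x * y * (x * y) = 1 := by rw [h, hw]
    have h3 := inv_eq_of_mul_eq_one_left h2
    rw [mul_inv_rev, inv_eq_of_mul_eq_one_left hx, inv_eq_of_mul_eq_one_left hy] at h3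
    exact h3
  have cbP : ∀ i ∈ Finset.Icc 1 (r + 5), C i * B i = B i * C i := fun i hi =>
    comm _ _ _ (sB i) (sC i) (sA i) (eBC i hi)
  have cbQ : ∀ t : {t : ℕ × ℕ × ℕ // t ∈ Cset r},
      C t.1.2.2 * B t.1.2.1 = B t.1.2.1 * C t.1.2.2 := fun t => by
    refine comm _ _ (H t) (sB _) (sC _) (sH t) ?_
    have := sw (sH t) ((mul_assoc _ _ _).symm.trans (eH t))
    rwa [mul_one] at this
  -- the parity character
  obtain ⟨ε, εb, εc, εd⟩ : ∃ ε : P1 r →* ℤˣ, (∀ i, ε (B i) = 1) ∧ (∀ i, ε (C i) = 1) ∧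
      (∀ i, ε (D i) = -1 ∨ D i = 1) := by
    let e : P1Gen r → ℤˣ := fun g => match g with
      | .a _ => 1 | .b _ => 1 | .c _ => 1 | .d _ => -1 | .f0 => -1 | .h _ => 1
    have eb : ∀ i, FreeGroup.lift e (bw r i) = 1 := by
      intro i; unfold bw; split_ifs <;> simp [e]
    have ec : ∀ i, FreeGroup.lift e (cw r i) = 1 := by
      intro i; unfold cw; split_ifs <;> simp [e]
    have ea : ∀ i, FreeGroup.lift e (aw r i) = 1 := by
      intro i; unfold aw; split_ifs <;> simp [e]
    have ed : ∀ i, 1 ≤ i ∧ i ≤ r + 5 → FreeGroup.lift e (dw r i) = -1 := by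
      intro i hi; unfold dw; rw [dif_pos hi]; simp [e]
    have ef : FreeGroup.lift e (fw r) = -1 := by simp [fw, e]
    have eh : ∀ t, FreeGroup.lift e (hw r t) = 1 := by intro t; simp [hw, e]
    have hrel : ∀ w ∈ P1Rels r, FreeGroup.lift e w = 1 := by
      intro w hw
      rcases hw with (⟨g, rfl⟩ | hw) | hw
      · simp [Int.units_mul_self]
      · obtain ⟨i, hi, hw⟩ := Set.mem_iUnion₂.1 hw
        have hi' := Finset.mem_Icc.1 hi
        rcases hw with rfl | rfl | rfl
        · simp [ea, eb, ec]
        · simp [ea, ef, ed i hi']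
        · simp [eb, ec, ef]
      · obtain ⟨t, hw⟩ := Set.mem_iUnion.1 hw
        rcases hw with rfl | rfl
        · simp [eb, ec, eh]
        · simp [eb, ec, Int.units_mul_self]
    refine ⟨PresentedGroup.toGroup hrel, ?_, ?_, ?_⟩
    · intro i; rw [hB]; exact eb i
    · intro i; rw [hC]; exact ec i
    · intro i
      by_cases hi : 1 ≤ i ∧ i ≤ r + 5
      · left; rw [hD]; exact ed i hi
      · right; simp only [hD, dw]; rw [dif_neg hi, map_one]
  -- the twisting permutations
  have hidx : ∀ i : Fin (r + 5), (i : ℕ) + 1 ∈ Finset.Icc 1 (r + 5) := fun i => by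
    have := i.2
    rw [Finset.mem_Icc]; omega
  choose X hX1 hX2 hX3 hX4 hX5 using fun i : Fin (r + 5) =>
    existsP (B (i + 1)) (C (i + 1)) F (sB _) (sC _) sF (cbP _ (hidx i)) (eFBF _ (hidx i))
  choose Y hY1 hY2 hY3 hY4 hY5 using fun t : {t : ℕ × ℕ × ℕ // t ∈ Cset r} =>
    existsQ (B t.1.2.1) (C t.1.2.2) (D t.1.1) ε (sB _) (sC _) (sD _) (cbQ t) (eDBD t)
      (εb _) (εc _) (εd _)
  obtain ⟨Λ, hΛ⟩ : ∃ Λ : P1 r →* Equiv.Perm (P1 r × ℤˣ), Λ = Lam (P1 r) := ⟨_, rfl⟩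
  obtain ⟨z, hz⟩ : ∃ z : Equiv.Perm (P1 r × ℤˣ), z = Zet (P1 r) := ⟨_, rfl⟩
  have zz : z * z = 1 := by rw [hz]; exact Zet_sq _
  have zc : ∀ w, z * Λ w = Λ w * z := by rw [hz, hΛ]; exact Zet_comm _
  have Λs : ∀ w, w * w = 1 → Λ w * Λ w = 1 := by rw [hΛ]; exact fun w => Lam_sq
  have Λi : Function.Injective Λ := by rw [hΛ]; exact Lam_inj _
  rw [← hΛ] at hX2 hX3 hX4 hX5 hY2 hY3 hY4 hY5
  rw [← hz] at hX5 hY5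
  have cj : ∀ b c f : P1 r, f * f = 1 → f * b * f = c →
      Λ b * Λ f = Λ f * Λ c ∧ Λ c * Λ f = Λ f * Λ b := fun b c f h1 h2 => by
    obtain ⟨h3, h4⟩ := conj_comm h1 h2
    simp only [← map_mul, h3, h4, and_self]
  have GP := fun i : Fin (r + 5) => gadgetP (Λ (B (i + 1))) (Λ (C (i + 1))) (Λ F) z (X i)
    (Λs _ (sB _)) (Λs _ (sC _)) (Λs _ sF) zz (hX1 i) (zc _) (zc _) (zc _)
    (by rw [← map_mul, ← map_mul, cbP _ (hidx i)]) (cj _ _ _ sF (eFBF _ (hidx i))).1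
    (cj _ _ _ sF (eFBF _ (hidx i))).2 (hX2 i) (hX3 i) (hX4 i) (hX5 i)
  have GQ := fun t : {t : ℕ × ℕ × ℕ // t ∈ Cset r} => gadgetQ (Λ (B t.1.2.1)) (Λ (C t.1.2.2))
    (Λ (D t.1.1)) z (Y t)
    (Λs _ (sB _)) (Λs _ (sC _)) (Λs _ (sD _)) zz (hY1 t) (zc _) (zc _) (zc _)
    (by rw [← map_mul, ← map_mul, cbQ t]) (cj _ _ _ (sD _) (eDBD t)).1
    (cj _ _ _ (sD _) (eDBD t)).2 (hY2 t) (hY3 t) (hY4 t) (hY5 t)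
  have Fz : Λ F * z * (Λ F * z) = 1 := by
    rw [mul_assoc, assoc_rule (zc F), ← mul_assoc, ← mul_assoc, Λs _ sF, one_mul, zz]
  -- the map from `Ga`
  obtain ⟨σ, σa, σb, σc, σd, σp, σf, σg, σm, σh, σq, σJ⟩ :
      ∃ σ : GaGen r → Equiv.Perm (P1 r × ℤˣ),
      (∀ i, σ (.a i) = Λ (PresentedGroup.mk (P1Rels r) (FreeGroup.of (.a i)))) ∧
      (∀ i, σ (.b i) = Λ (PresentedGroup.mk (P1Rels r) (FreeGroup.of (.b i)))) ∧
      (∀ i, σ (.c i) = Λ (PresentedGroup.mk (P1Rels r) (FreeGroup.of (.c i)))) ∧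
      (∀ i, σ (.d i) = Λ (PresentedGroup.mk (P1Rels r) (FreeGroup.of (.d i)))) ∧
      (∀ i l, σ (.p i l) = ![Λ (B (i + 1)) * z, Λ (B (i + 1)) * z * X i, X i, Λ F * X i,
        Λ F * Λ (B (i + 1)) * X i] l) ∧
      (∀ l, σ (.f l) = ![Λ F, Λ F * z, z] l) ∧
      (∀ l, σ (.g l) = ![z, Λ F * z, Λ F] l) ∧
      (∀ l, σ (.m l) = 1) ∧
      (∀ t, σ (.h t) = Λ (PresentedGroup.mk (P1Rels r) (FreeGroup.of (.h t)))) ∧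
      (∀ t l, σ (.q t l) = ![Λ (D t.1.1) * z, Λ (B t.1.2.1) * z, Y t, Λ (B t.1.2.1) * z * Y t,
        Λ (D t.1.1) * Λ (B t.1.2.1) * z * Y t, Λ (D t.1.1) * z * Y t] l) ∧
      σ .J = 1 :=
    ⟨fun s => match s with
      | .a i => Λ (PresentedGroup.mk (P1Rels r) (FreeGroup.of (.a i)))
      | .b i => Λ (PresentedGroup.mk (P1Rels r) (FreeGroup.of (.b i)))
      | .c i => Λ (PresentedGroup.mk (P1Rels r) (FreeGroup.of (.c i)))
      | .d i => Λ (PresentedGroup.mk (P1Rels r) (FreeGroup.of (.d i)))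
      | .p i l => ![Λ (B (i + 1)) * z, Λ (B (i + 1)) * z * X i, X i, Λ F * X i,
        Λ F * Λ (B (i + 1)) * X i] l
      | .f l => ![Λ F, Λ F * z, z] l
      | .g l => ![z, Λ F * z, Λ F] l
      | .m _ => 1
      | .h t => Λ (PresentedGroup.mk (P1Rels r) (FreeGroup.of (.h t)))
      | .q t l => ![Λ (D t.1.1) * z, Λ (B t.1.2.1) * z, Y t, Λ (B t.1.2.1) * z * Y t,
        Λ (D t.1.1) * Λ (B t.1.2.1) * z * Y t, Λ (D t.1.1) * z * Y t] l
      | .J => 1, fun _ => rfl, fun _ => rfl, fun _ => rfl, fun _ => rfl, fun _ _ => rfl,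
      fun _ => rfl, fun _ => rfl, fun _ => rfl, fun _ => rfl, fun _ _ => rfl, rfl⟩
  have la : ∀ i, FreeGroup.lift σ (ga r i) = Λ (A i) := by
    intro i; simp only [hA, ga, aw]; split_ifs <;> simp [σa]
  have lb : ∀ i, FreeGroup.lift σ (gb r i) = Λ (B i) := by
    intro i; simp only [hB, gb, bw]; split_ifs <;> simp [σb]
  have lc : ∀ i, FreeGroup.lift σ (gc r i) = Λ (C i) := by
    intro i; simp only [hC, gc, cw]; split_ifs <;> simp [σc]
  have ld : ∀ i, FreeGroup.lift σ (gd r i) = Λ (D i) := by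
    intro i; simp only [hD, gd, dw]; split_ifs <;> simp [σd]
  have lh : ∀ t, FreeGroup.lift σ (gh r t) = Λ (H t) := by
    intro t; simp only [hH, gh, hw]; simp [σh]
  have lf0 : FreeGroup.lift σ (gf r 0) = Λ F := by simp [gf, σf]
  have lf1 : FreeGroup.lift σ (gf r 1) = Λ F * z := by simp [gf, σf]
  have lf2 : FreeGroup.lift σ (gf r 2) = z := by simp [gf, σf]
  have lg0 : FreeGroup.lift σ (gg r 0) = z := by simp [gg, σg]
  have lg1 : FreeGroup.lift σ (gg r 1) = Λ F * z := by simp [gg, σg]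
  have lg2 : FreeGroup.lift σ (gg r 2) = Λ F := by simp [gg, σg]
  have lm : ∀ l, FreeGroup.lift σ (gm r l) = 1 := by
    intro l; unfold gm; split_ifs <;> simp [σm]
  have lJ : FreeGroup.lift σ (gJ r) = 1 := by simp [gJ, σJ]
  have σs : ∀ s, σ s * σ s = 1 := by
    intro s
    rcases s with i | i | i | i | ⟨i, l⟩ | l | l | l | t | ⟨t, l⟩ | _
    · rw [σa]; exact Λs _ (s1 _)
    · rw [σb]; exact Λs _ (s1 _)
    · rw [σc]; exact Λs _ (s1 _)
    · rw [σd]; exact Λs _ (s1 _)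
    · rw [σp]
      obtain ⟨⟨h1, h2, h3, h4⟩, -⟩ := GP i
      fin_cases l
      · exact h1
      · exact h2
      · exact hX1 i
      · exact h3
      · exact h4
    · rw [σf]
      fin_cases l
      · exact Λs _ sF
      · exact Fz
      · exact zz
    · rw [σg]
      fin_cases l
      · exact zz
      · exact Fz
      · exact Λs _ sF
    · rw [σm, one_mul]
    · rw [σh]; exact Λs _ (s1 _)
    · rw [σq]
      obtain ⟨⟨h1, h2, h3, h4, h5⟩, -⟩ := GQ t
      fin_cases l
      · exact h1
      · exact h2
      · exact hY1 t
      · exact h3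
      · exact h4
      · exact h5
    · rw [σJ, one_mul]
  have hrel : ∀ w ∈ GaRels r, FreeGroup.lift σ w = 1 := by
    intro w hw
    rcases hw with (⟨s, rfl⟩ | ⟨s, -, rfl⟩) | ((hw | hw) | hw)
    · simp [σs]
    · simp only [map_mul, lJ, FreeGroup.lift_apply_of, one_mul, mul_one, σs]
    · obtain ⟨i, hi, hw⟩ := Set.mem_iUnion₂.1 hw
      have hi' := Finset.mem_Icc.1 hi
      obtain ⟨k, rfl⟩ : ∃ k : Fin (r + 5), i = k + 1 := ⟨⟨i - 1, by omega⟩, by simp; omega⟩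
      have hk : (k : ℕ) ≤ r + 4 := by omega
      obtain ⟨-, h1, h2, h3, h4, h5⟩ := GP k
      have lp1 : FreeGroup.lift σ (gp r (k + 1) 1) = Λ (B (k + 1)) * z := by
        simp [gp, σp, hk]
      have lp2 : FreeGroup.lift σ (gp r (k + 1) 2) = Λ (B (k + 1)) * z * X k := by
        simp [gp, σp, hk]
      have lp3 : FreeGroup.lift σ (gp r (k + 1) 3) = X k := by
        simp [gp, σp, hk]
      have lp4 : FreeGroup.lift σ (gp r (k + 1) 4) = Λ F * X k := by
        simp [gp, σp, hk]
      have lp5 : FreeGroup.lift σ (gp r (k + 1) 5) = Λ F * Λ (B (k + 1)) * X k := by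
        simp [gp, σp, hk]
      rcases hw with rfl | rfl | rfl | rfl | rfl | rfl | rfl | rfl <;>
        simp only [map_mul, map_inv, la, lb, lc, ld, lf0, lf1, lf2, lp1, lp2, lp3, lp4, lp5]
      · rw [← map_mul, eBC _ hi, mul_inv_cancel]
      · rw [← map_mul, eFD _ hi, mul_inv_cancel]
      · rw [← mul_assoc, Λs _ sF, one_mul, zz]
      · exact h1
      · exact h2
      · exact h3
      · exact h4
      · exact h5
    · obtain ⟨t, hw⟩ := Set.mem_iUnion.1 hw
      obtain ⟨-, h1, h2, h3, h4, h5, h6⟩ := GQ t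
      have lq1 : FreeGroup.lift σ (gq r t 1) = Λ (D t.1.1) * z := by simp [gq, σq]
      have lq2 : FreeGroup.lift σ (gq r t 2) = Λ (B t.1.2.1) * z := by simp [gq, σq]
      have lq3 : FreeGroup.lift σ (gq r t 3) = Y t := by simp [gq, σq]
      have lq4 : FreeGroup.lift σ (gq r t 4) = Λ (B t.1.2.1) * z * Y t := by simp [gq, σq]
      have lq5 : FreeGroup.lift σ (gq r t 5) = Λ (D t.1.1) * Λ (B t.1.2.1) * z * Y t := by
        simp [gq, σq]
      have lq6 : FreeGroup.lift σ (gq r t 6) = Λ (D t.1.1) * z * Y t := by simp [gq, σq]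
      rcases hw with rfl | rfl | rfl | rfl | rfl | rfl | rfl <;>
        simp only [map_mul, map_inv, la, lb, lc, ld, lh, lf2, lq1, lq2, lq3, lq4, lq5, lq6]
      · rw [← map_mul, ← map_mul, eH, map_one]
      · exact h1
      · exact h2
      · exact h3
      · exact h4
      · exact h5
      · exact h6
    · have e1 : z * (Λ F * z) * Λ F = 1 := by
        rw [← zc, ← mul_assoc, zz, one_mul, Λs _ sF]
      rcases hw with rfl | rfl | rfl | rfl | rfl <;>
        simp only [map_mul, map_inv, lf0, lf1, lf2, lg0, lg1, lg2, lm, lJ, mul_one, inv_one]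
      · exact e1
      · exact Λs _ sF
      · exact zz
      · exact Fz
  -- the map from `P1` to `Ga`
  have r2 : ∀ w ∈ GaRels r, PresentedGroup.mk (GaRels r) w = 1 := fun w hw =>
    PresentedGroup.one_of_mem hw
  obtain ⟨M, hM⟩ : ∃ M : FreeGroup (GaGen r) →* Ga r, M = PresentedGroup.mk (GaRels r) := ⟨_, rfl⟩
  rw [← hM] at r2
  have s2 : ∀ g : GaGen r, M (FreeGroup.of g) * M (FreeGroup.of g) = 1 := fun g => by
    rw [← map_mul]
    exact r2 _ (Or.inl (Or.inl ⟨g, rfl⟩))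
  have tC : ∀ i, M (gc r i) * M (gc r i) = 1 := by
    intro i; unfold gc; split_ifs
    · exact s2 _
    · simp
  have tD : ∀ i, M (gd r i) * M (gd r i) = 1 := by
    intro i; unfold gd; split_ifs
    · exact s2 _
    · simp
  have tF : ∀ i, M (gf r i) * M (gf r i) = 1 := by
    intro i; unfold gf; split_ifs
    · exact s2 _
    · simp
  have tp : ∀ i l, M (gp r i l) * M (gp r i l) = 1 := by
    intro i l; unfold gp; split_ifs
    · exact s2 _
    · simp
  have tq : ∀ t l, M (gq r t l) * M (gq r t l) = 1 := by
    intro t l; unfold gq; split_ifs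
    · exact s2 _
    · simp
  have GA : ∀ i ∈ Finset.Icc 1 (r + 5), ∀ w ∈ ({gb r i * gc r i * (ga r i)⁻¹,
      gf r 0 * gd r i * (ga r i)⁻¹,
      gf r 0 * gf r 1 * gf r 2,
      gb r i * gf r 2 * gp r i 1,
      gp r i 1 * gp r i 2 * gp r i 3,
      gf r 0 * gp r i 3 * gp r i 4,
      gc r i * gp r i 4 * gp r i 5,
      gf r 1 * gp r i 2 * gp r i 5} : Set (FreeGroup (GaGen r))), M w = 1 := fun i hi w hw =>
    r2 _ (Or.inr (Or.inl (Or.inl (Set.mem_biUnion (x := i) (by simpa using hi) hw))))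
  have GT : ∀ t : {t : ℕ × ℕ × ℕ // t ∈ Cset r}, ∀ w ∈ ({gh r t * gb r t.1.2.1 * gc r t.1.2.2,
      gd r t.1.1 * gq r t 1 * gf r 2,
      gb r t.1.2.1 * gf r 2 * gq r t 2,
      gq r t 2 * gq r t 3 * gq r t 4,
      gd r t.1.1 * gq r t 4 * gq r t 5,
      gc r t.1.2.2 * gq r t 5 * gq r t 6,
      gq r t 1 * gq r t 3 * gq r t 6} : Set (FreeGroup (GaGen r))), M w = 1 := fun t w hw =>
    r2 _ (Or.inr (Or.inl (Or.inr (Set.mem_iUnion.2 ⟨t, hw⟩))))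
  let τ : P1Gen r → Ga r := fun g => match g with
    | .a i => M (FreeGroup.of (.a i))
    | .b i => M (FreeGroup.of (.b i))
    | .c i => M (FreeGroup.of (.c i))
    | .d i => M (FreeGroup.of (.d i))
    | .f0 => M (FreeGroup.of (.f 0))
    | .h t => M (FreeGroup.of (.h t))
  have ka : ∀ i, FreeGroup.lift τ (aw r i) = M (ga r i) := by
    intro i; simp only [ga, aw]; split_ifs <;> simp [τ]
  have kb : ∀ i, FreeGroup.lift τ (bw r i) = M (gb r i) := by
    intro i; simp only [gb, bw]; split_ifs <;> simp [τ]
  have kc : ∀ i, FreeGroup.lift τ (cw r i) = M (gc r i) := by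
    intro i; simp only [gc, cw]; split_ifs <;> simp [τ]
  have kd : ∀ i, FreeGroup.lift τ (dw r i) = M (gd r i) := by
    intro i; simp only [gd, dw]; split_ifs <;> simp [τ]
  have kf : FreeGroup.lift τ (fw r) = M (gf r 0) := by
    simp [fw, gf, τ]
  have kh : ∀ t, FreeGroup.lift τ (hw r t) = M (gh r t) := by
    intro t; simp [hw, gh, τ]
  have τs : ∀ g, τ g * τ g = 1 := by
    intro g
    cases g <;> exact s2 _
  have hrel2 : ∀ w ∈ P1Rels r, FreeGroup.lift τ w = 1 := by
    intro w hw
    rcases hw with (⟨g, rfl⟩ | hw) | hw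
    · simp only [map_mul, FreeGroup.lift_apply_of, τs]
    · obtain ⟨i, hi, hw⟩ := Set.mem_iUnion₂.1 hw
      have g := GA i hi
      simp only [Set.mem_insert_iff, Set.mem_singleton_iff, forall_eq_or_imp, forall_eq, map_mul,
        map_inv] at g
      obtain ⟨g1, g2, g3, g4, g5, g6, g7, g8⟩ := g
      rcases hw with rfl | rfl | rfl <;> simp only [map_mul, map_inv, ka, kb, kc, kd, kf]
      · exact g1
      · exact g2
      · rw [mul_inv_eq_one]
        exact deriveP _ _ _ _ _ _ _ _ _ _ (tC _) (tF _) (tF _) (tp _ _) (tp _ _) (tp _ _)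
          (tp _ _) (tp _ _) g3 g4 g5 g6 g7 g8
    · obtain ⟨t, hw⟩ := Set.mem_iUnion.1 hw
      have g := GT t
      simp only [Set.mem_insert_iff, Set.mem_singleton_iff, forall_eq_or_imp, forall_eq, map_mul,
        map_inv] at g
      obtain ⟨g1, g2, g3, g4, g5, g6, g7⟩ := g
      rcases hw with rfl | rfl <;> simp only [map_mul, map_inv, kb, kc, kd, kh]
      · exact g1
      · rw [mul_inv_eq_one]
        exact deriveQ _ _ _ _ _ _ _ _ _ _ (tC _) (tD _) (tF _) (tq _ _) (tq _ _) (tq _ _)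
          (tq _ _) (tq _ _) g2 g3 g4 g5 g6 g7
  subst hM
  refine ⟨PresentedGroup.toGroup hrel2, ?_, ?_, kf, kh⟩
  · have key : (PresentedGroup.toGroup hrel).comp (PresentedGroup.toGroup hrel2) = Λ := by
      apply PresentedGroup.ext
      intro g
      rw [MonoidHom.comp_apply, PresentedGroup.toGroup.of]
      cases g with
      | a i => exact (PresentedGroup.toGroup.of hrel).trans (σa i)
      | b i => exact (PresentedGroup.toGroup.of hrel).trans (σb i)
      | c i => exact (PresentedGroup.toGroup.of hrel).trans (σc i)
      | d i => exact (PresentedGroup.toGroup.of hrel).trans (σd i)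
      | f0 => exact (PresentedGroup.toGroup.of hrel).trans ((σf 0).trans (by rw [hF]; rfl))
      | h t => exact (PresentedGroup.toGroup.of hrel).trans (σh t)
    have : Function.Injective ((PresentedGroup.toGroup hrel).comp (PresentedGroup.toGroup hrel2)) := by
      rw [key]; exact Λi
    rw [MonoidHom.coe_comp] at this
    exact this.of_comp
  · intro i _
    exact ⟨ka i, kb i, kc i, kd i⟩
end
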